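/- Let H be a fixed tree with vertex set {1,…,|H|}, let t be a fixed positive integer and c>0 a fixed constant, and let m:ℕ→ℕ satisfy cn ≤ m(n) ≤ (1+o(1))n as n→∞. Then the probability that P_{n,m(n)} has at least t components admitting an order-preserving isomorphism to H tends to 1 as n→∞. -/

import Mathlib

/-!
The proof is a switching argument between planar graphs on `n` vertices. Fix a large `k`. A graph
with `m` edges and fewer than `t` components that are order-preserving copies of `H` (a bad graph) is
transformed, with constant-factor losses only, into a planar graph with `m - h` edges and `h`
distinguished isolated vertices, which still has boundedly many such components. Placing the copy
of `H` on the isolated vertices adds `h - 1` edges; one further edge, which keeps the graph planar,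
restores the number `m`. There are at least `k n` choices for this last edge, whereas the result
arises in `O(n)` ways: the number of order-preserving copies is still bounded, and the last
edge is one of `m = O(n)` edges. Hence the bad graphs form an `O(1 / k)` fraction of all graphs
(`final_switch`, `bad_le`), and `k` is arbitrary.

*Addable edges* (`many_addable`). A planar graph with at most `(1 + δ) n` edges, `δ = δ(k)`, has at
least `k n` non-edges whose addition keeps it planar. If there are more than `2 k` components, the
edges between components suffice. Otherwise a spanning forest misses few edges; mark its roots and
the endpoints of the nonforest edges. The marked
vertices cut the forest into few pieces, each an induced forest attached to the rest of the graph
at two vertices (`piece_struct`, `class_count`), so any edge inside a piece is addable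
(`piece_planar`), and by Cauchy–Schwarz many pairs lie inside a common piece.

*Trading an edge for an isolated vertex* (`step`). A graph with at most about `n` edges has linearly
many isolated vertices, leaves, or vertices of degree two. Accordingly, delete any edge; delete the
edge at a leaf; suppress a vertex of degree two with nonadjacent neighbours; or isolate a vertex of
degree two in a triangle and add an addable edge elsewhere.

*Planarity.* Planarity means having no `K₅` or `K₃,₃` minor. As these graphs are 3-connected, such a
minor in a graph with a separation of order at most two lives on one side of the separation, with
the virtual edge added (`minor_of_sep`); conversely the virtual edge can be produced by contraction
(`minor_of_contract`). A functional graph plus two edges is too sparse to have either minor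
(`minor_edge_bound`).
-/

open SimpleGraph Filter Asymptotics

/-- `H` is a minor of `G`: to each vertex of `H` we can assign a connected nonempty
branch set in `G`, pairwise disjoint, with an edge of `G` between the branch sets of
any two adjacent vertices of `H`. -/
def IsMinor {α β : Type*} (H : SimpleGraph α) (G : SimpleGraph β) : Prop :=
  ∃ f : α → Set β,
    (∀ a, (G.induce (f a)).Connected) ∧
    (∀ a b, a ≠ b → Disjoint (f a) (f b)) ∧
    (∀ a b, H.Adj a b → ∃ u ∈ f a, ∃ v ∈ f b, G.Adj u v)

/-- A graph is planar iff it has neither a `K₅`-minor nor a `K₃,₃`-minor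
(Wagner's theorem). -/
def IsPlanar {V : Type*} (G : SimpleGraph V) : Prop :=
  ¬ IsMinor (completeGraph (Fin 5)) G ∧
    ¬ IsMinor (completeBipartiteGraph (Fin 3) (Fin 3)) G

/-- The number of edges of a graph. -/
noncomputable def edgeCount {V : Type*} (G : SimpleGraph V) : ℕ :=
  G.edgeSet.ncard

/-- The degree of a vertex. -/
noncomputable def vertexDegree {V : Type*} (G : SimpleGraph V) (v : V) : ℕ :=
  (G.neighborSet v).ncard

/-- `𝒫(n,m)`: the set of labelled planar graphs on `{1,…,n}` with exactly `m` edges. -/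
def planarSet (n m : ℕ) : Set (SimpleGraph (Fin n)) :=
  {G | IsPlanar G ∧ edgeCount G = m}

/-- The probability that the uniform random planar graph `P_{n,m}` satisfies `P`. -/
noncomputable def planarProb (n m : ℕ) (P : SimpleGraph (Fin n) → Prop) : ℝ :=
  ({G ∈ planarSet n m | P G}.ncard : ℝ) / ((planarSet n m).ncard : ℝ)

/-- The number of pendant edges (edges incident to a vertex of degree 1). -/
noncomputable def pendantCount {V : Type*} (G : SimpleGraph V) : ℕ :=
  {e ∈ G.edgeSet | ∃ v ∈ e, vertexDegree G v = 1}.ncard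

/-- The set of addable non-edges of `G`: non-edges whose addition keeps the graph planar. -/
def addableSet {V : Type*} (G : SimpleGraph V) : Set (Sym2 V) :=
  {e | ¬ e.IsDiag ∧ e ∉ G.edgeSet ∧ IsPlanar (G ⊔ SimpleGraph.fromEdgeSet {e})}

/-- `add(n,m)`: the minimum number of addable non-edges over all graphs in `𝒫(n,m)`. -/
noncomputable def addMin (n m : ℕ) : ℕ :=
  sInf ((fun G => (addableSet G).ncard) '' planarSet n m)

/-- `W` carries an induced order-preserving copy of `H` in `G`: the increasing bijection
from `{1,…,h}` to `W` is an isomorphism between `H` and the induced subgraph `G[W]`. -/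
def IsOrderCopy {h n : ℕ} (H : SimpleGraph (Fin h)) (G : SimpleGraph (Fin n))
    (W : Finset (Fin n)) : Prop :=
  ∃ hW : W.card = h,
    ∀ i j : Fin h,
      H.Adj i j ↔ G.Adj ((W.orderIsoOfFin hW i : Fin n)) ((W.orderIsoOfFin hW j : Fin n))

/-- `W` is the vertex set of a connected component of `G`. -/
def IsComponent {V : Type*} (G : SimpleGraph V) (W : Finset V) : Prop :=
  (G.induce (W : Set V)).Connected ∧ ∀ v ∈ W, ∀ u, G.Adj v u → u ∈ W

/-- The number of components of `G` admitting an order-preserving isomorphism to `H`. -/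
noncomputable def numOrderComponents {h n : ℕ} (H : SimpleGraph (Fin h))
    (G : SimpleGraph (Fin n)) : ℕ :=
  {W : Finset (Fin n) | IsComponent G W ∧ IsOrderCopy H G W}.ncard

/-- The number of distinct cycles (as subgraphs, identified with their edge sets) of
length at most `k` in `S`. -/
noncomputable def cycleCountLe {V : Type*} (S : SimpleGraph V) (k : ℕ) : ℕ :=
  {E : Set (Sym2 V) | ∃ (v : V) (c : S.Walk v v),
    c.IsCycle ∧ c.length ≤ k ∧ {e | e ∈ c.edges} = E}.ncard

namespace TreeComp

/-! ### Connected vertex sets and minors -/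

/-- `S` is nonempty and connected in `G`, phrased through cuts: a subset of `S` that meets `S` and
is closed under adjacency inside `S` is all of `S`. -/
def Conn {V : Type*} (G : SimpleGraph V) (S : Set V) : Prop :=
  S.Nonempty ∧ ∀ P : Set V, (∃ x ∈ S, x ∈ P) →
    (∀ y ∈ S, ∀ z ∈ S, G.Adj y z → y ∈ P → z ∈ P) → S ⊆ P

lemma conn_iff {V : Type*} (G : SimpleGraph V) (S : Set V) :
    (G.induce S).Connected ↔ Conn G S := by
  constructor
  · intro hc
    obtain ⟨⟨x0, hx0⟩⟩ := hc.nonempty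
    refine ⟨⟨x0, hx0⟩, ?_⟩
    rintro P ⟨x, hxS, hxP⟩ hcl y hy
    obtain ⟨w⟩ := hc.preconnected ⟨x, hxS⟩ ⟨y, hy⟩
    have key : ∀ (a b : S) (w : (G.induce S).Walk a b), (a : V) ∈ P → (b : V) ∈ P := by
      intro a b w
      induction w with
      | nil => exact id
      | @cons u v w hadj p ih =>
        intro hu
        exact ih (hcl u u.2 v v.2 hadj hu)
    exact key _ _ w hxP
  · rintro ⟨⟨x, hx⟩, hS⟩
    have hall : ∀ y (hy : y ∈ S), (G.induce S).Reachable ⟨x, hx⟩ ⟨y, hy⟩ := by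
      intro y hy
      have := hS {y | ∃ hy : y ∈ S, (G.induce S).Reachable ⟨x, hx⟩ ⟨y, hy⟩}
        ⟨x, hx, hx, Reachable.refl _⟩
        (by
          rintro y hy z hz hyz ⟨_, hr⟩
          refine ⟨hz, hr.trans (Adj.reachable ?_)⟩
          exact hyz) hy
      exact this.2
    have : Nonempty S := ⟨⟨x, hx⟩⟩
    refine ⟨?_⟩
    rintro ⟨a, ha⟩ ⟨b, hb⟩
    exact (hall a ha).symm.trans (hall b hb)

lemma isMinor_iff {α β : Type*} (H : SimpleGraph α) (G : SimpleGraph β) :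
    IsMinor H G ↔ ∃ f : α → Set β, (∀ a, Conn G (f a)) ∧
      (∀ a b, a ≠ b → Disjoint (f a) (f b)) ∧
      (∀ a b, H.Adj a b → ∃ u ∈ f a, ∃ v ∈ f b, G.Adj u v) := by
  simp only [IsMinor, conn_iff]

lemma Conn.mono {V : Type*} {G G' : SimpleGraph V} (h : G ≤ G') {S : Set V} (hS : Conn G S) :
    Conn G' S :=
  ⟨hS.1, fun P hP hcl => hS.2 P hP fun y hy z hz hyz => hcl y hy z hz (h hyz)⟩

lemma IsMinor.mono {α β : Type*} {H : SimpleGraph α} {G G' : SimpleGraph β} (h : G ≤ G')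
    (hm : IsMinor H G) : IsMinor H G' := by
  rw [isMinor_iff] at *
  obtain ⟨f, h1, h2, h3⟩ := hm
  refine ⟨f, fun a => (h1 a).mono h, h2, fun a b hab => ?_⟩
  obtain ⟨u, hu, v, hv, huv⟩ := h3 a b hab
  exact ⟨u, hu, v, hv, h huv⟩

lemma planar_mono {V : Type*} {G G' : SimpleGraph V} (h : G ≤ G') (hp : IsPlanar G') :
    IsPlanar G :=
  ⟨fun hm => hp.1 (IsMinor.mono h hm), fun hm => hp.2 (IsMinor.mono h hm)⟩

/-- The edges of `G` inside `A`, as a graph on the original vertex type. -/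
def restr {V : Type*} (G : SimpleGraph V) (A : Set V) : SimpleGraph V where
  Adj x y := G.Adj x y ∧ x ∈ A ∧ y ∈ A
  symm := ⟨fun _ _ h => ⟨h.1.symm, h.2.2, h.2.1⟩⟩
  loopless := ⟨fun _ h => G.irrefl h.1⟩

lemma restr_le {V : Type*} (G : SimpleGraph V) (A : Set V) : restr G A ≤ G := fun _ _ h => h.1

/-- Deleting at most two vertices leaves `K` connected and nonempty. -/
def ThreeConn {α : Type*} (K : SimpleGraph α) : Prop :=
  ∀ X : Set α, (∃ i0 j0, ∀ i, i ∉ X → i = i0 ∨ i = j0) → Conn K X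

/-- One side of `minor_of_sep`: if every branch set avoiding the separator `{a, b}` meets `B`, then
cutting all branch sets down to `B` gives a model in `G[B] + ab`. -/
lemma minor_side {α V : Type*} {K : SimpleGraph α} {G : SimpleGraph V} {A B : Set V} {a b : V}
    (haB : a ∈ B) (hbB : b ∈ B)
    (hAB : ∀ x, x ∈ A → x ∈ B → x = a ∨ x = b)
    (hsep : ∀ x y, G.Adj x y → (x ∈ A ∧ y ∈ A) ∨ (x ∈ B ∧ y ∈ B))
    (f : α → Set V) (h1 : ∀ i, Conn G (f i)) (h2 : ∀ i j, i ≠ j → Disjoint (f i) (f j))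
    (h3 : ∀ i j, K.Adj i j → ∃ u ∈ f i, ∃ v ∈ f j, G.Adj u v)
    (hne : ∀ i, a ∉ f i → b ∉ f i → ∃ x ∈ f i, x ∈ B) :
    IsMinor K (restr G B ⊔ edge a b) := by
  have hne' : ∀ i, ∃ x ∈ f i, x ∈ B := by
    intro i
    by_cases ha : a ∈ f i
    · exact ⟨a, ha, haB⟩
    by_cases hb : b ∈ f i
    · exact ⟨b, hb, hbB⟩
    exact hne i ha hb
  -- A branch set that avoids the separator stays inside `B \ A`.
  have hout : ∀ i x, x ∈ f i → x ∈ A → a ∈ f i ∨ b ∈ f i := by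
    intro i x hx hxA
    by_contra hcon
    push Not at hcon
    have hsub := (h1 i).2 {y | y ∉ A} (by
      obtain ⟨y, hy, hyB⟩ := hne' i
      refine ⟨y, hy, fun hyA => ?_⟩
      rcases hAB y hyA hyB with rfl | rfl
      · exact hcon.1 hy
      · exact hcon.2 hy) (by
      intro y hy z hz hyz hyA hzA
      rcases hsep y z hyz with h | h
      · exact hyA h.1
      · rcases hAB z hzA h.2 with rfl | rfl
        · exact hcon.1 hz
        · exact hcon.2 hz)
    exact hsub hx hxA
  rw [isMinor_iff]
  refine ⟨fun i => f i ∩ B, ?_, ?_, ?_⟩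
  · intro i
    obtain ⟨x0, hx0, hx0B⟩ := hne' i
    refine ⟨⟨x0, hx0, hx0B⟩, ?_⟩
    rintro P ⟨x, ⟨hx, hxB⟩, hxP⟩ hcl y ⟨hy, hyB⟩
    -- Membership of the separator vertices of `f i` in `P` decides the part of `f i` outside `B`.
    have hab : ∀ u v, (u = a ∨ u = b) → (v = a ∨ v = b) → u ∈ f i → v ∈ f i → u ∈ P → v ∈ P := by
      intro u v hu hv huf hvf huP
      by_cases huv : u = v
      · exact huv ▸ huP
      have huB : u ∈ B := by rcases hu with rfl | rfl <;> assumption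
      have hvB : v ∈ B := by rcases hv with rfl | rfl <;> assumption
      refine hcl u ⟨huf, huB⟩ v ⟨hvf, hvB⟩ (Or.inr ?_) huP
      rw [edge_adj]
      refine ⟨?_, huv⟩
      rcases hu with rfl | rfl <;> rcases hv with rfl | rfl <;> simp_all
    have hsub := (h1 i).2 {y | (y ∈ B → y ∈ P) ∧
        (y ∉ B → ∃ c, (c = a ∨ c = b) ∧ c ∈ f i ∧ c ∈ P)} ⟨x, hx, fun _ => hxP, fun h => absurd hxB h⟩
      (by
        rintro y hy z hz hyz ⟨hy1, hy2⟩
        by_cases hyB : y ∈ B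
        · by_cases hzB : z ∈ B
          · exact ⟨fun _ => hcl y ⟨hy, hyB⟩ z ⟨hz, hzB⟩ (Or.inl ⟨hyz, hyB, hzB⟩) (hy1 hyB),
              fun h => absurd hzB h⟩
          · refine ⟨fun h => absurd h hzB, fun _ => ⟨y, ?_, hy, hy1 hyB⟩⟩
            rcases hsep y z hyz with h | h
            · exact hAB y h.1 hyB
            · exact absurd h.2 hzB
        · obtain ⟨c, hc, hcf, hcP⟩ := hy2 hyB
          refine ⟨fun hzB => ?_, fun _ => ⟨c, hc, hcf, hcP⟩⟩
          rcases hsep y z hyz with h | h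
          · exact hab c z hc (hAB z h.2 hzB) hcf hz hcP
          · exact absurd h.1 hyB)
    exact (hsub hy).1 hyB
  · intro i j hij
    exact (h2 i j hij).mono Set.inter_subset_left Set.inter_subset_left
  · intro i j hij
    obtain ⟨u, hu, v, hv, huv⟩ := h3 i j hij
    by_cases hB : u ∈ B ∧ v ∈ B
    · exact ⟨u, ⟨hu, hB.1⟩, v, ⟨hv, hB.2⟩, Or.inl ⟨huv, hB⟩⟩
    · have hA : u ∈ A ∧ v ∈ A := by
        rcases hsep u v huv with h | h
        · exact h
        · exact absurd h hB
      have hdis : ∀ x, x ∈ f i → x ∈ f j → False := fun x hxi hxj =>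
        Set.disjoint_left.mp (h2 i j hij.ne) hxi hxj
      have hi := hout i u hu hA.1
      have hj := hout j v hv hA.2
      have hadj : ∀ x y, x ∈ f i → y ∈ f j → (x = a ∧ y = b ∨ x = b ∧ y = a) →
          (edge a b).Adj x y := by
        intro x y hx hy h
        rw [edge_adj]
        exact ⟨h, fun he => hdis x hx (he ▸ hy)⟩
      rcases hi with hi | hi <;> rcases hj with hj | hj
      · exact (hdis _ hi hj).elim
      · exact ⟨a, ⟨hi, haB⟩, b, ⟨hj, hbB⟩, Or.inr (hadj _ _ hi hj (by simp))⟩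
      · exact ⟨b, ⟨hi, hbB⟩, a, ⟨hj, haB⟩, Or.inr (hadj _ _ hi hj (by simp))⟩
      · exact (hdis _ hi hj).elim

/-- A 3-connected minor of a graph with a separation `(A, B)` of order at most two, with separator
`{a, b}`, is already a minor of one side with the virtual edge `ab` added. The case `a = b` is
allowed; `edge a a` is then empty. -/
lemma minor_of_sep {α V : Type*} [Nonempty α] {K : SimpleGraph α} (hK : ThreeConn K) {G : SimpleGraph V}
    {A B : Set V} {a b : V} (haA : a ∈ A) (hbA : b ∈ A) (haB : a ∈ B) (hbB : b ∈ B)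
    (hAB : ∀ x, x ∈ A → x ∈ B → x = a ∨ x = b) (hcov : ∀ x, x ∈ A ∨ x ∈ B)
    (hsep : ∀ x y, G.Adj x y → (x ∈ A ∧ y ∈ A) ∨ (x ∈ B ∧ y ∈ B))
    (hm : IsMinor K G) :
    IsMinor K (restr G A ⊔ edge a b) ∨ IsMinor K (restr G B ⊔ edge a b) := by
  rw [isMinor_iff] at hm
  obtain ⟨f, h1, h2, h3⟩ := hm
  have hX : Conn K {i | a ∉ f i ∧ b ∉ f i} := by
    have huniq : ∀ c : V, ∃ i0, ∀ i, c ∈ f i → i = i0 := by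
      intro c
      by_cases hc : ∃ i, c ∈ f i
      · obtain ⟨i0, hi0⟩ := hc
        refine ⟨i0, fun i hi => ?_⟩
        by_contra hne
        exact Set.disjoint_left.mp (h2 i i0 hne) hi hi0
      · push Not at hc
        exact ⟨Classical.arbitrary α, fun i hi => absurd hi (hc i)⟩
    obtain ⟨i0, hi0⟩ := huniq a
    obtain ⟨j0, hj0⟩ := huniq b
    refine hK _ ⟨i0, j0, fun i hi => ?_⟩
    simp only [Set.mem_ofPred_eq, not_and_or, not_not] at hi
    exact hi.imp (hi0 i) (hj0 i)
  by_cases hB : ∃ i ∈ {i | a ∉ f i ∧ b ∉ f i}, i ∈ {i | ∃ x ∈ f i, x ∈ B}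
  · right
    have := hX.2 _ hB (by
      rintro i hi j hj hij ⟨x, hx, hxB⟩
      -- `f i` avoids `A`, hence its edge to `f j` ends in `B`.
      have hsub := (h1 i).2 {y | y ∉ A} ⟨x, hx, fun hxA => by
          rcases hAB x hxA hxB with rfl | rfl
          · exact hi.1 hx
          · exact hi.2 hx⟩ (by
        intro y hy z hz hyz hyA hzA
        rcases hsep y z hyz with h | h
        · exact hyA h.1
        · rcases hAB z hzA h.2 with rfl | rfl
          · exact hi.1 hz
          · exact hi.2 hz)
      obtain ⟨u, hu, v, hv, huv⟩ := h3 i j hij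
      rcases hsep u v huv with h | h
      · exact absurd h.1 (hsub hu)
      · exact ⟨v, hv, h.2⟩)
    exact minor_side haB hbB hAB hsep f h1 h2 h3 fun i ha hb => this ⟨ha, hb⟩
  · left
    push Not at hB
    refine minor_side (A := B) haA hbA (fun x h h' => hAB x h' h)
      (fun x y h => (hsep x y h).symm) f h1 h2 h3 fun i ha hb => ?_
    obtain ⟨x, hx⟩ := (h1 i).1
    refine ⟨x, hx, (hcov x).resolve_right fun hxB => hB i ⟨ha, hb⟩ ⟨x, hx, hxB⟩⟩

/-- If a connected set `Q` of `G` meets `B` at most in `a` and sends an edge to `b`, then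
`G[B] + ab` arises from `G` by contracting `Q` onto `a`; minors of it are minors of `G`. -/
lemma minor_of_contract {α V : Type*} {K : SimpleGraph α} (hK : ∀ i, ∃ j, K.Adj i j)
    {G : SimpleGraph V} {B Q : Set V} {a b q : V} (haB : a ∈ B) (hbB : b ∈ B)
    (hQ : Conn G Q) (haQ : a ∈ Q) (hQB : ∀ x ∈ Q, x ∈ B → x = a) (hq : q ∈ Q) (hqb : G.Adj q b)
    (hm : IsMinor K (restr G B ⊔ edge a b)) : IsMinor K G := by
  rw [isMinor_iff] at *
  obtain ⟨f, h1, h2, h3⟩ := hm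
  have hB : ∀ x y, (restr G B ⊔ edge a b).Adj x y → x ∈ B ∧ y ∈ B := by
    intro x y hxy
    rcases hxy with h | h
    · exact h.2
    · rw [edge_adj] at h
      rcases h.1 with ⟨rfl, rfl⟩ | ⟨rfl, rfl⟩ <;> exact ⟨by assumption, by assumption⟩
  have hfB : ∀ i, f i ⊆ B := by
    intro i
    obtain ⟨j, hij⟩ := hK i
    obtain ⟨u, hu, v, hv, huv⟩ := h3 i j hij
    exact (h1 i).2 B ⟨u, hu, (hB _ _ huv).1⟩ fun y _ z _ hyz _ => (hB _ _ hyz).2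
  have hmem : ∀ i x, x ∈ f i → x ∈ Q → x = a := fun i x hx hxQ => hQB x hxQ (hfB i hx)
  refine ⟨fun i => f i ∪ {x | x ∈ Q ∧ a ∈ f i}, ?_, ?_, ?_⟩
  · intro i
    refine ⟨(h1 i).1.mono Set.subset_union_left, ?_⟩
    rintro P ⟨x, hx, hxP⟩ hcl
    by_cases ha : a ∈ f i
    · have hQP : ∀ y ∈ Q, y ∈ P → Q ⊆ P := fun y hy hyP => hQ.2 P ⟨y, hy, hyP⟩
        fun u hu v hv huv => hcl u (Or.inr ⟨hu, ha⟩) v (Or.inr ⟨hv, ha⟩) huv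
      have hfP : ∀ y ∈ f i, y ∈ P → f i ⊆ P := fun y hy hyP => (h1 i).2 P ⟨y, hy, hyP⟩ (by
        intro u hu v hv huv huP
        rcases huv with h | h
        · exact hcl u (Or.inl hu) v (Or.inl hv) h.1 huP
        · rw [edge_adj] at h
          rcases h.1 with ⟨rfl, rfl⟩ | ⟨rfl, rfl⟩
          · exact hcl q (Or.inr ⟨hq, ha⟩) v (Or.inl hv) hqb (hQP u haQ huP hq)
          · exact hQP q hq (hcl u (Or.inl hu) q (Or.inr ⟨hq, ha⟩) hqb.symm huP) haQ)
      have haP : a ∈ P := by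
        rcases hx with hx | hx
        · exact hfP x hx hxP ha
        · exact hQP x hx.1 hxP haQ
      rintro y (hy | hy)
      · exact hfP a ha haP hy
      · exact hQP a haQ haP hy.1
    · have hx' : x ∈ f i := hx.resolve_right fun h => ha h.2
      rintro y (hy | hy)
      · refine (h1 i).2 P ⟨x, hx', hxP⟩ (fun u hu v hv huv huP => ?_) hy
        rcases huv with h | h
        · exact hcl u (Or.inl hu) v (Or.inl hv) h.1 huP
        · rw [edge_adj] at h
          rcases h.1 with ⟨rfl, rfl⟩ | ⟨rfl, rfl⟩ <;> contradiction
      · exact absurd hy.2 ha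
  · intro i j hij
    have hd := Set.disjoint_left.mp (h2 i j hij)
    rw [Set.disjoint_left]
    rintro x (hx | hx) (hy | hy)
    · exact hd hx hy
    · have := hmem i x hx hy.1
      exact hd (this ▸ hx) hy.2
    · have := hmem j x hy hx.1
      exact hd hx.2 (this ▸ hy)
    · exact hd hx.2 hy.2
  · intro i j hij
    obtain ⟨u, hu, v, hv, huv⟩ := h3 i j hij
    rcases huv with h | h
    · exact ⟨u, Or.inl hu, v, Or.inl hv, h.1⟩
    · rw [edge_adj] at h
      rcases h.1 with ⟨rfl, rfl⟩ | ⟨rfl, rfl⟩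
      · exact ⟨q, Or.inr ⟨hq, hu⟩, v, Or.inl hv, hqb⟩
      · exact ⟨u, Or.inl hu, q, Or.inr ⟨hq, hv⟩, hqb.symm⟩


/-- Edges inside a connected set `S` number at least `|S| - 1`. -/
lemma card_le_inner {V : Type*} [Finite V] (G : SimpleGraph V) (S : Set V) (hS : Conn G S) :
    S.ncard ≤ {e ∈ G.edgeSet | ∀ x ∈ e, x ∈ S}.ncard + 1 := by
  have h1 := ((conn_iff G S).2 hS).card_vert_le_card_edgeSet_add_one
  have h2 : Nat.card (G.induce S).edgeSet ≤ {e ∈ G.edgeSet | ∀ x ∈ e, x ∈ S}.ncard := by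
    rw [Nat.card_coe_set_eq]
    refine Set.ncard_le_ncard_of_injOn (Sym2.map Subtype.val) ?_
      (Sym2.map.injective Subtype.val_injective).injOn (Set.toFinite _)
    intro e
    induction e using Sym2.ind with
    | _ x y =>
      intro h
      refine ⟨h, ?_⟩
      simp
  rw [Nat.card_coe_set_eq] at h1
  omega

/-- A graph whose edges join a vertex to its image under a function `par`, apart from two further
edges, has only minors `K` with `|E(K)| ≤ |V(K)| + 2`. -/
lemma minor_edge_bound {α V : Type*} [Fintype α] [Fintype V] {K : SimpleGraph α}
    {G : SimpleGraph V} (par : V → V) (e1 e2 : Sym2 V)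
    (hG : ∀ x y, G.Adj x y → par x = y ∨ par y = x ∨ s(x, y) = e1 ∨ s(x, y) = e2)
    (hm : IsMinor K G) : K.edgeSet.ncard ≤ Fintype.card α + 2 := by
  classical
  rw [isMinor_iff] at hm
  obtain ⟨f, h1, h2, h3⟩ := hm
  have hdis : ∀ i j x, x ∈ f i → x ∈ f j → i = j := by
    intro i j x hi hj
    by_contra hne
    exact Set.disjoint_left.mp (h2 i j hne) hi hj
  let Ein : α → Finset (Sym2 V) := fun i =>
    Finset.univ.filter fun e => e ∈ G.edgeSet ∧ ∀ x ∈ e, x ∈ f i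
  let Ecr : Finset (Sym2 V) := Finset.univ.filter fun e => e ∈ G.edgeSet ∧
    ∃ i j u v, i ≠ j ∧ u ∈ f i ∧ v ∈ f j ∧ e = s(u, v)
  let Etot : Finset (Sym2 V) :=
    Finset.univ.filter fun e => e ∈ G.edgeSet ∧ ∀ x ∈ e, ∃ i, x ∈ f i
  let U : α → Finset V := fun i => Finset.univ.filter fun x => x ∈ f i
  have hEin : ∀ i, (U i).card ≤ (Ein i).card + 1 := by
    intro i
    have := card_le_inner G (f i) (h1 i)
    rw [Set.ncard_eq_toFinset_card', Set.ncard_eq_toFinset_card'] at this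
    convert this using 2
    · ext x; simp [U]
    · congr 1; ext x; simp [Ein]
  have hsum : ∑ i, (Ein i).card + Ecr.card ≤ Etot.card := by
    rw [← Finset.card_biUnion, ← Finset.card_union_of_disjoint]
    · apply Finset.card_le_card
      intro e he
      rw [Finset.mem_union] at he
      rcases he with he | he
      · simp only [Finset.mem_biUnion, Ein, Finset.mem_filter, Finset.mem_univ, true_and] at he
        obtain ⟨i, he, hx⟩ := he
        simp only [Etot, Finset.mem_filter, Finset.mem_univ, true_and]
        exact ⟨he, fun x h => ⟨i, hx x h⟩⟩
      · simp only [Ecr, Finset.mem_filter, Finset.mem_univ, true_and] at he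
        obtain ⟨he, i, j, u, v, hij, hu, hv, rfl⟩ := he
        simp only [Etot, Finset.mem_filter, Finset.mem_univ, true_and]
        refine ⟨he, fun x hx => ?_⟩
        rcases Sym2.mem_iff.mp hx with rfl | rfl
        · exact ⟨i, hu⟩
        · exact ⟨j, hv⟩
    · rw [Finset.disjoint_left]
      intro e he he'
      simp only [Finset.mem_biUnion, Ein, Finset.mem_filter, Finset.mem_univ, true_and] at he
      simp only [Ecr, Finset.mem_filter, Finset.mem_univ, true_and] at he'
      obtain ⟨k, -, hk⟩ := he
      obtain ⟨-, i, j, u, v, hij, hu, hv, rfl⟩ := he'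
      exact hij ((hdis i k u hu (hk u (by simp))).trans (hdis j k v hv (hk v (by simp))).symm)
    · intro i _ j _ hij
      rw [Function.onFun, Finset.disjoint_left]
      intro e he he'
      simp only [Ein, Finset.mem_filter, Finset.mem_univ, true_and] at he he'
      induction e using Sym2.ind with
      | _ x y => exact hij (hdis i j x (he.2 x (by simp)) (he'.2 x (by simp)))
  have htot : Etot.card ≤ ∑ i, (U i).card + 2 := by
    have hsub : Etot ⊆ ((Finset.univ.biUnion U).image fun x => s(x, par x)) ∪ {e1, e2} := by
      intro e he
      simp only [Etot, Finset.mem_filter, Finset.mem_univ, true_and] at he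
      induction e using Sym2.ind with
      | _ x y =>
        obtain ⟨he, hx⟩ := he
        have hU : ∀ w ∈ s(x, y), w ∈ Finset.univ.biUnion U := by
          intro w hw
          obtain ⟨i, hi⟩ := hx w hw
          exact Finset.mem_biUnion.2 ⟨i, Finset.mem_univ _, by simp [U, hi]⟩
        rw [Finset.mem_union]
        rcases hG x y he with h | h | h | h
        · exact Or.inl (Finset.mem_image.2 ⟨x, hU x (by simp), by rw [h]⟩)
        · exact Or.inl (Finset.mem_image.2 ⟨y, hU y (by simp), by rw [h]; exact Sym2.eq_swap⟩)
        · right; simp [h]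
        · right; simp [h]
    calc Etot.card ≤ _ := Finset.card_le_card hsub
      _ ≤ _ := Finset.card_union_le _ _
      _ ≤ _ := by
        gcongr
        · exact Finset.card_image_le.trans Finset.card_biUnion_le
        · exact Finset.card_le_two
  have hK : K.edgeSet.ncard ≤ Ecr.card := by
    have hex : ∀ ε ∈ K.edgeSet, ∃ e ∈ Ecr, ∃ i j u v, ε = s(i, j) ∧ u ∈ f i ∧ v ∈ f j ∧
        e = s(u, v) := by
      intro ε
      induction ε using Sym2.ind with
      | _ i j =>
        intro hij
        obtain ⟨u, hu, v, hv, huv⟩ := h3 i j hij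
        refine ⟨s(u, v), ?_, i, j, u, v, rfl, hu, hv, rfl⟩
        simp only [Ecr, Finset.mem_filter, Finset.mem_univ, true_and]
        exact ⟨huv, i, j, u, v, K.ne_of_adj hij, hu, hv, rfl⟩
    have : Nonempty (Sym2 V) := ⟨e1⟩
    choose! g hg1 hg2 using hex
    rw [← Set.ncard_coe_finset]
    refine Set.ncard_le_ncard_of_injOn g (fun ε hε => hg1 ε hε) ?_ (Set.toFinite _)
    intro ε hε ε' hε' heq
    obtain ⟨i, j, u, v, rfl, hu, hv, he⟩ := hg2 ε hε
    obtain ⟨i', j', u', v', rfl, hu', hv', he'⟩ := hg2 ε' hε'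
    rw [he, he', Sym2.eq_iff] at heq
    rcases heq with ⟨rfl, rfl⟩ | ⟨rfl, rfl⟩
    · rw [hdis _ _ _ hu hu', hdis _ _ _ hv hv']
    · rw [hdis _ _ _ hu hv', hdis _ _ _ hv hu', Sym2.eq_swap]
  have hcard : ∑ i, (U i).card ≤ ∑ i, (Ein i).card + Fintype.card α := by
    calc ∑ i, (U i).card ≤ ∑ i, ((Ein i).card + 1) := Finset.sum_le_sum fun i _ => hEin i
      _ = _ := by rw [Finset.sum_add_distrib]; simp
  omega

/-! ### The two forbidden minors -/

lemma edges_K5 : (completeGraph (Fin 5)).edgeSet.ncard = 10 := by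
  have := card_edgeFinset_top_eq_card_choose_two (V := Fin 5)
  rw [← coe_edgeFinset, Set.ncard_coe_finset]
  convert this using 1
  simp [Nat.choose]

lemma edges_K33 : 9 ≤ (completeBipartiteGraph (Fin 3) (Fin 3)).edgeSet.ncard := by
  let g : Fin 3 × Fin 3 → Sym2 (Fin 3 ⊕ Fin 3) := fun p => s(Sum.inl p.1, Sum.inr p.2)
  have hg : Function.Injective g := by
    rintro ⟨a, b⟩ ⟨c, d⟩ h
    simp only [g, Sym2.eq_iff] at h
    simpa using h
  have h : (Set.univ : Set (Fin 3 × Fin 3)).ncard ≤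
      (completeBipartiteGraph (Fin 3) (Fin 3)).edgeSet.ncard := by
    refine Set.ncard_le_ncard_of_injOn g ?_ hg.injOn (Set.toFinite _)
    rintro ⟨a, b⟩ -
    simp [g, completeBipartiteGraph]
  simpa [Set.ncard_univ] using h

lemma threeConn_K5 : ThreeConn (completeGraph (Fin 5)) := by
  rintro X ⟨i0, j0, hX⟩
  refine ⟨?_, ?_⟩
  · have : ∃ i : Fin 5, i ≠ i0 ∧ i ≠ j0 := by clear hX; revert i0 j0; decide
    obtain ⟨i, hi⟩ := this
    by_contra hne
    rw [Set.not_nonempty_iff_eq_empty] at hne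
    rcases hX i (by simp [hne]) with h | h
    · exact hi.1 h
    · exact hi.2 h
  · rintro P ⟨x, hx, hxP⟩ hcl y hy
    by_cases hxy : x = y
    · exact hxy ▸ hxP
    · exact hcl x hx y hy hxy hxP

lemma threeConn_K33 : ThreeConn (completeBipartiteGraph (Fin 3) (Fin 3)) := by
  rintro X ⟨i0, j0, hX⟩
  have hL : ∃ i : Fin 3, (Sum.inl i : Fin 3 ⊕ Fin 3) ∈ X := by
    have : ∃ i : Fin 3, (Sum.inl i : Fin 3 ⊕ Fin 3) ≠ i0 ∧ (Sum.inl i : Fin 3 ⊕ Fin 3) ≠ j0 := by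
      clear hX; revert i0 j0; decide
    obtain ⟨i, hi⟩ := this
    refine ⟨i, ?_⟩
    by_contra hne
    rcases hX _ hne with h | h
    · exact hi.1 h
    · exact hi.2 h
  have hR : ∃ i : Fin 3, (Sum.inr i : Fin 3 ⊕ Fin 3) ∈ X := by
    have : ∃ i : Fin 3, (Sum.inr i : Fin 3 ⊕ Fin 3) ≠ i0 ∧ (Sum.inr i : Fin 3 ⊕ Fin 3) ≠ j0 := by
      clear hX; revert i0 j0; decide
    obtain ⟨i, hi⟩ := this
    refine ⟨i, ?_⟩
    by_contra hne
    rcases hX _ hne with h | h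
    · exact hi.1 h
    · exact hi.2 h
  obtain ⟨l, hl⟩ := hL
  obtain ⟨r, hr⟩ := hR
  refine ⟨⟨_, hl⟩, ?_⟩
  rintro P ⟨x, hx, hxP⟩ hcl
  have hLR : ∀ a b, (Sum.inl a : Fin 3 ⊕ Fin 3) ∈ X → (Sum.inr b : Fin 3 ⊕ Fin 3) ∈ X →
      ((Sum.inl a : Fin 3 ⊕ Fin 3) ∈ P ↔ (Sum.inr b : Fin 3 ⊕ Fin 3) ∈ P) := by
    intro a b ha hb
    exact ⟨hcl _ ha _ hb (by simp), hcl _ hb _ ha (by simp)⟩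
  have hlP : (Sum.inl l : Fin 3 ⊕ Fin 3) ∈ P := by
    rcases x with a | b
    · exact (hLR l r hl hr).2 ((hLR a r hx hr).1 hxP)
    · exact (hLR l b hl hx).2 hxP
  have hrP := (hLR l r hl hr).1 hlP
  rintro (a | b) hy
  · exact (hLR a r hy hr).2 hrP
  · exact (hLR l b hl hy).1 hlP

/-- The properties of `K₅` and `K₃,₃` on which all planarity arguments below rest. -/
structure Good {α : Type} [Fintype α] (K : SimpleGraph α) : Prop where
  three : ThreeConn K
  nbr : ∀ i, ∃ j, K.Adj i j
  edges : Fintype.card α + 2 < K.edgeSet.ncard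

lemma good_K5 : Good (completeGraph (Fin 5)) where
  three := threeConn_K5
  nbr := by
    intro i
    have : ∃ j : Fin 5, i ≠ j := by revert i; decide
    exact this
  edges := by rw [edges_K5]; simp

lemma good_K33 : Good (completeBipartiteGraph (Fin 3) (Fin 3)) where
  three := threeConn_K33
  nbr := by
    rintro (i | i)
    · exact ⟨Sum.inr 0, by simp⟩
    · exact ⟨Sum.inl 0, by simp⟩
  edges := lt_of_lt_of_le (by simp) edges_K33

/-- To transfer planarity from `G` to `G'` it suffices to pull minors back, for all graphs that
share the relevant properties of `K₅` and `K₃,₃`. -/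
lemma planar_of_minor {V W : Type*} {G : SimpleGraph V} {G' : SimpleGraph W}
    (h : ∀ (α : Type) [Fintype α] [Nonempty α] (K : SimpleGraph α), Good K →
      IsMinor K G' → IsMinor K G) (hG : IsPlanar G) : IsPlanar G' :=
  ⟨fun hm => hG.1 (h _ _ good_K5 hm), fun hm => hG.2 (h _ _ good_K33 hm)⟩

/-- A functional graph plus two edges has no minor with the properties in `Good`. -/
lemma Good.not_minor {V : Type*} [Fintype V] {α : Type} [Fintype α]
    {K : SimpleGraph α} (hK : Good K) {G : SimpleGraph V} (par : V → V) (e1 e2 : Sym2 V)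
    (hG : ∀ x y, G.Adj x y → par x = y ∨ par y = x ∨ s(x, y) = e1 ∨ s(x, y) = e2) :
    ¬ IsMinor K G := fun hm => by
  have := minor_edge_bound par e1 e2 hG hm
  have := hK.edges
  omega

/-! ### Operations that keep a graph planar -/

lemma edge_self_eq {V : Type*} (a : V) : edge a a = (⊥ : SimpleGraph V) := by
  ext x y
  simp only [edge_adj, bot_adj, iff_false]
  rintro ⟨⟨rfl, rfl⟩ | ⟨rfl, rfl⟩, h⟩ <;> exact h rfl

/-- Joining two components by an edge. -/
lemma planar_add_cross {V : Type*} [Fintype V] {G : SimpleGraph V} (hG : IsPlanar G) {x y : V}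
    (hxy : ¬ G.Reachable x y) : IsPlanar (G ⊔ edge x y) := by
  refine planar_of_minor (fun α _ _ K hK hm => ?_) hG
  have hy : y ∉ {v | G.Reachable x v} := hxy
  -- First separate at `y`, then split off the pendant edge `xy` at `x`.
  have h1 := minor_of_sep (A := {v | G.Reachable x v} ∪ {y}) (B := {v | ¬ G.Reachable x v})
    (a := y) (b := y) hK.three (Or.inr rfl) (Or.inr rfl) hy hy
    (by
      rintro v (hv | hv) hv'
      · exact absurd hv hv'
      · exact Or.inl hv)
    (fun v => by
      by_cases hv : G.Reachable x v
      · exact Or.inl (Or.inl hv)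
      · exact Or.inr hv)
    (by
      intro u v huv
      rcases huv with h | h
      · by_cases hu : G.Reachable x u
        · exact Or.inl ⟨Or.inl hu, Or.inl (hu.trans h.reachable)⟩
        · exact Or.inr ⟨hu, fun hv => hu (hv.trans h.symm.reachable)⟩
      · rw [edge_adj] at h
        left
        rcases h.1 with ⟨rfl, rfl⟩ | ⟨rfl, rfl⟩
        · exact ⟨Or.inl (Reachable.refl _), Or.inr rfl⟩
        · exact ⟨Or.inr rfl, Or.inl (Reachable.refl _)⟩) hm
  rw [edge_self_eq, sup_bot_eq, sup_bot_eq] at h1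
  rcases h1 with h1 | h1
  · have h2 := minor_of_sep (A := {v | v ≠ y}) (B := {x, y}) (a := x) (b := x) hK.three
      (fun h => hxy (h ▸ Reachable.refl _)) (fun h => hxy (h ▸ Reachable.refl _)) (by simp) (by simp)
      (by
        rintro v hv (hv' | hv')
        · exact Or.inl hv'
        · exact absurd hv' hv)
      (fun v => by
        by_cases hv : v = y
        · right; simp [hv]
        · left; exact hv)
      (by
        rintro u v ⟨h | h, hu, hv⟩
        · left
          have aux : ∀ u v, G.Adj u v → u ∈ {v | G.Reachable x v} ∪ {y} →
              v ∈ {v | G.Reachable x v} ∪ {y} → u ≠ y := by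
            rintro u v h hu hv rfl
            rcases hv with hv | hv
            · exact hxy (Reachable.trans hv h.symm.reachable)
            · exact h.ne (Eq.symm hv)
          exact ⟨aux u v h hu hv, aux v u h.symm hv hu⟩
        · rw [edge_adj] at h
          right
          rcases h.1 with ⟨rfl, rfl⟩ | ⟨rfl, rfl⟩ <;> simp) h1
    rw [edge_self_eq, sup_bot_eq, sup_bot_eq] at h2
    rcases h2 with h2 | h2
    · refine IsMinor.mono ?_ h2
      rintro u v ⟨⟨h | h, -⟩, hu, hv⟩
      · exact h
      · rw [edge_adj] at h
        rcases h.1 with ⟨rfl, rfl⟩ | ⟨rfl, rfl⟩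
        · exact absurd rfl hv
        · exact absurd rfl hu
    · refine absurd h2 (hK.not_minor (α := α) id s(x, y) s(x, y) ?_)
      rintro u v ⟨h, hu, hv⟩
      have hne := h.ne
      simp only [Set.mem_insert_iff, Set.mem_singleton_iff] at hu hv
      right; right; left
      rcases hu with rfl | rfl <;> rcases hv with rfl | rfl
      · exact absurd rfl hne
      · rfl
      · exact Sym2.eq_swap
      · exact absurd rfl hne
  · refine IsMinor.mono ?_ h1
    rintro u v ⟨h | h, hu, hv⟩
    · exact h
    · rw [edge_adj] at h
      rcases h.1 with ⟨rfl, rfl⟩ | ⟨rfl, rfl⟩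
      · exact absurd (Reachable.refl _) hu
      · exact absurd (Reachable.refl _) hv

/-- Suppressing a vertex `v` with neighbours `u` and `w`: the edge `uw` replaces the path `uvw`. -/
lemma planar_suppress {V : Type*} {G : SimpleGraph V} (hG : IsPlanar G) {u v w : V}
    (huv : G.Adj u v) (hvw : G.Adj v w) : IsPlanar (restr G {v}ᶜ ⊔ edge u w) := by
  refine planar_of_minor (fun α _ _ K hK hm => ?_) hG
  refine minor_of_contract (Q := {u, v}) (q := v) hK.nbr (by simpa using huv.ne)
    (by simpa using hvw.ne.symm) ?_ (by simp) (by simp) (by simp) hvw hm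
  refine ⟨⟨u, by simp⟩, ?_⟩
  rintro P ⟨x, hx, hxP⟩ hcl
  have h1 := hcl u (by simp) v (by simp) huv
  have h2 := hcl v (by simp) u (by simp) huv.symm
  rintro y hy
  simp only [Set.mem_insert_iff, Set.mem_singleton_iff] at hx hy
  rcases hx with rfl | rfl <;> rcases hy with rfl | rfl <;> tauto

/-- Placing a functional graph `T` (in particular, a tree) on a nonempty set `W` of isolated
vertices. -/
lemma planar_add_tree {V : Type*} [Fintype V] {G T : SimpleGraph V} (hG : IsPlanar G) {W : Set V}
    (hW : W.Nonempty) (hiso : ∀ x ∈ W, ∀ y, ¬ G.Adj x y)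
    (hT : ∀ x y, T.Adj x y → x ∈ W ∧ y ∈ W) (par : V → V)
    (hpar : ∀ x y, T.Adj x y → par x = y ∨ par y = x) : IsPlanar (G ⊔ T) := by
  refine planar_of_minor (fun α _ _ K hK hm => ?_) hG
  obtain ⟨w, hw⟩ := hW
  have h1 := minor_of_sep (A := W) (B := Wᶜ ∪ {w}) (a := w) (b := w) hK.three hw hw
    (by simp) (by simp)
    (by
      rintro x hx (hx' | hx')
      · exact absurd hx hx'
      · exact Or.inl hx')
    (fun x => by
      by_cases hx : x ∈ W
      · exact Or.inl hx
      · exact Or.inr (Or.inl hx))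
    (by
      intro x y hxy
      rcases hxy with h | h
      · exact Or.inr ⟨Or.inl fun hx => hiso x hx y h, Or.inl fun hy => hiso y hy x h.symm⟩
      · exact Or.inl (hT x y h)) hm
  rw [edge_self_eq, sup_bot_eq, sup_bot_eq] at h1
  rcases h1 with h1 | h1
  · refine absurd h1 (hK.not_minor (α := α) par s(w, w) s(w, w) ?_)
    rintro x y ⟨h | h, hx, hy⟩
    · exact absurd h (hiso x hx y)
    · rcases hpar x y h with h | h
      · exact Or.inl h
      · exact Or.inr (Or.inl h)
  · refine IsMinor.mono ?_ h1
    rintro x y ⟨h | h, hx, hy⟩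
    · exact h
    · have := hT x y h
      rcases hx with hx | hx
      · exact absurd this.1 hx
      · rcases hy with hy | hy
        · exact absurd this.2 hy
        · exact absurd (hx.trans hy.symm) h.ne


/-! ### Rooted forests and their pieces -/

/-- Every graph has a spanning rooted forest, given by a parent function `par` fixing exactly the
roots and decreasing `lev` elsewhere, with one root in each component. -/
lemma exists_forest {V : Type*} (G : SimpleGraph V) : ∃ (par : V → V) (lev : V → ℕ),
    (∀ x, par x = x ∨ (G.Adj x (par x) ∧ lev (par x) < lev x)) ∧
    (∀ x, ∃ r, par r = r ∧ G.Reachable r x) ∧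
    (∀ r r', par r = r → par r' = r' → G.Reachable r r' → r = r') := by
  classical
  let root : V → V := fun x => (G.connectedComponentMk x).out
  have hroot : ∀ x, G.Reachable (root x) x := fun x =>
    ConnectedComponent.exact (Quot.out_eq (G.connectedComponentMk x))
  have hroot' : ∀ x y, G.Reachable x y → root x = root y := fun x y h => by
    simp only [root, ConnectedComponent.sound h]
  have hex : ∀ x, ∃ y, (x = root x ∧ y = x) ∨ (x ≠ root x ∧ G.Adj x y ∧
      G.dist y (root y) < G.dist x (root x)) := by
    intro x
    by_cases hx : x = root x
    · exact ⟨x, Or.inl ⟨hx, rfl⟩⟩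
    · obtain ⟨p, hp⟩ := (hroot x).symm.exists_walk_length_eq_dist
      generalize hr : root x = r at p hp hx
      cases p with
      | nil => exact absurd rfl hx
      | @cons _ y _ h q =>
        refine ⟨y, Or.inr ⟨hx, h, ?_⟩⟩
        rw [← hroot' x y h.reachable, hr, ← hp, Walk.length_cons]
        exact Nat.lt_succ_of_le (dist_le q)
  choose par hpar using hex
  have hfix : ∀ x, par x = x → x = root x := by
    intro x hx
    rcases hpar x with h | h
    · exact h.1
    · rw [hx] at h
      exact absurd h.2.1 (G.irrefl)
  refine ⟨par, fun x => G.dist x (root x), fun x => ?_, fun x => ⟨root x, ?_, hroot x⟩, ?_⟩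
  · rcases hpar x with h | h
    · exact Or.inl h.2
    · exact Or.inr h.2
  · have : root (root x) = root x := hroot' _ _ (hroot x)
    rcases hpar (root x) with h | h
    · exact h.2
    · exact absurd this.symm h.1
  · intro r r' hr hr' hrr
    rw [hfix r hr, hfix r' hr', hroot' r r' hrr]

/-- The elements of `M` that are descendants of `x` (or `x` itself). -/
def desc {V : Type*} (par : V → V) (M : Set V) (x : V) : Set V := {μ | μ ∈ M ∧ ∃ k, par^[k] μ = x}

section pieces

variable {V : Type*} {par : V → V} {lev : V → ℕ}

lemma iter_fixed {x : V} (hx : par x = x) (k : ℕ) : par^[k] x = x :=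
  Function.iterate_fixed hx k

lemma lev_iter (h : ∀ x, par x = x ∨ lev (par x) < lev x) (x : V) (k : ℕ) :
    lev (par^[k] x) ≤ lev x := by
  induction k with
  | zero => rfl
  | succ k ih =>
    rw [Function.iterate_succ_apply']
    rcases h (par^[k] x) with h' | h'
    · rw [h']; exact ih
    · omega

lemma anc_antisymm (h : ∀ x, par x = x ∨ lev (par x) < lev x) {x y : V} {k j : ℕ}
    (h1 : par^[k] x = y) (h2 : par^[j] y = x) : x = y := by
  rcases h x with hx | hx
  · rw [← h1, iter_fixed hx]
  · cases k with
    | zero => exact h1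
    | succ k =>
      rw [Function.iterate_succ_apply] at h1
      have := lev_iter h (par x) k
      have := lev_iter h y j
      rw [h1] at *
      rw [h2] at *
      omega

lemma anc_comparable {ν x y : V} {p q : ℕ} (h1 : par^[p] ν = x) (h2 : par^[q] ν = y) :
    (∃ i, par^[i] x = y) ∨ (∃ i, par^[i] y = x) := by
  rcases le_total p q with h | h
  · left
    refine ⟨q - p, ?_⟩
    rw [← h1, ← Function.iterate_add_apply, Nat.sub_add_cancel h, h2]
  · right
    refine ⟨p - q, ?_⟩
    rw [← h2, ← Function.iterate_add_apply, Nat.sub_add_cancel h, h1]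

lemma desc_par (M : Set V) (x : V) : desc par M x ⊆ desc par M (par x) := by
  rintro μ ⟨hμ, k, hk⟩
  exact ⟨hμ, k + 1, by rw [Function.iterate_succ_apply', hk]⟩

lemma desc_iter (M : Set V) (x : V) (k : ℕ) : desc par M x ⊆ desc par M (par^[k] x) := by
  induction k with
  | zero => rfl
  | succ k ih =>
    rw [Function.iterate_succ_apply']
    exact ih.trans (desc_par M _)

/-- Some iterate of `par` is a root. -/
lemma exists_root_iter (h : ∀ x, par x = x ∨ lev (par x) < lev x) (x : V) :
    ∃ k, par (par^[k] x) = par^[k] x := by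
  induction hl : lev x using Nat.strong_induction_on generalizing x with
  | _ l ih =>
    rcases h x with hx | hx
    · exact ⟨0, hx⟩
    · obtain ⟨k, hk⟩ := ih _ (hl ▸ hx) (par x) rfl
      exact ⟨k + 1, by simpa only [Function.iterate_succ_apply] using hk⟩

/-- The nearest ancestor (possibly the vertex itself) with a descendant in `M`. -/
lemma exists_hat (h : ∀ x, par x = x ∨ lev (par x) < lev x) {M : Set V}
    (hM : ∀ x, par x = x → x ∈ M) : ∃ hat : V → V, (∀ x, (desc par M (hat x)).Nonempty) ∧
      (∀ x, (desc par M x).Nonempty → hat x = x) ∧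
      (∀ x, ¬ (desc par M x).Nonempty → hat x = hat (par x)) := by
  classical
  have hex : ∀ x, ∃ k, (desc par M (par^[k] x)).Nonempty := by
    intro x
    obtain ⟨k, hk⟩ := exists_root_iter h x
    exact ⟨k, _, hM _ hk, 0, rfl⟩
  refine ⟨fun x => par^[Nat.find (hex x)] x, fun x => Nat.find_spec (hex x), fun x hx => ?_,
    fun x hx => ?_⟩
  · have : Nat.find (hex x) = 0 := by
      rw [Nat.find_eq_zero]
      exact hx
    simp only [this, Function.iterate_zero, id]
  · have : Nat.find (hex x) = Nat.find (hex (par x)) + 1 := by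
      rw [Nat.find_eq_iff]
      refine ⟨by rw [Function.iterate_succ_apply]; exact Nat.find_spec (hex (par x)), ?_⟩
      intro n hn
      cases n with
      | zero => exact hx
      | succ n =>
        rw [Function.iterate_succ_apply]
        exact Nat.find_min (hex (par x)) (by omega)
    simp only [this, Function.iterate_succ_apply]

/-- Structure of a piece `S`: calling a vertex nonfree if it has a marked descendant, these are the
vertices whose nearest nonfree ancestor has a given set `D` of marked descendants. The nonfree
vertices of `S` form a path from a bottom vertex `z` up to a top
vertex `a`; forest edges leave `S` only upwards from `a` or downwards from `z`, and `z` is the only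
vertex of `S` that can be marked. If `z` is not marked, it has two nonfree children. -/
lemma piece_struct (h : ∀ x, par x = x ∨ lev (par x) < lev x) {M : Set V} {hat : V → V}
    (hat1 : ∀ x, (desc par M x).Nonempty → hat x = x)
    (hat2 : ∀ x, ¬ (desc par M x).Nonempty → hat x = hat (par x))
    {x0 : V} {D : Set V} (hx0 : desc par M x0 = D) (hD : D.Nonempty) :
    ∃ (z : V) (j1 : ℕ), desc par M z = D ∧
      (∀ j ≤ j1, desc par M (hat (par^[j] z)) = D) ∧
      (∀ j < j1, par^[j + 1] z ≠ par^[j] z) ∧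
      (∀ y, desc par M (hat y) = D → y ∈ M → y = z) ∧
      (∀ y, desc par M (hat y) = D → desc par M (hat (par y)) ≠ D → y = par^[j1] z) ∧
      (∀ w, desc par M (hat w) ≠ D → desc par M (hat (par w)) = D → par w = z) ∧
      (z ∈ M ∨ ∃ c1 c2, c1 ≠ c2 ∧ par c1 = z ∧ par c2 = z ∧ c1 ≠ z ∧ c2 ≠ z ∧
        (desc par M c1).Nonempty ∧ (desc par M c2).Nonempty) := by
  classical
  obtain ⟨μ, hμ⟩ := hD
  have hD : D.Nonempty := ⟨μ, hμ⟩
  have hμM : μ ∈ M := by rw [← hx0] at hμ; exact hμ.1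
  have hC : ∃ k, desc par M (par^[k] μ) = D := by
    rw [← hx0] at hμ
    obtain ⟨-, k, hk⟩ := hμ
    exact ⟨k, by rw [hk, hx0]⟩
  obtain ⟨k0, hk0, hk0min⟩ : ∃ k0, desc par M (par^[k0] μ) = D ∧
      ∀ k < k0, desc par M (par^[k] μ) ≠ D :=
    ⟨Nat.find hC, Nat.find_spec hC, fun k hk => Nat.find_min hC hk⟩
  obtain ⟨z, hz⟩ : ∃ z, z = par^[k0] μ := ⟨_, rfl⟩
  rw [← hz] at hk0
  -- Vertices with descendant set `D` are exactly those reached from `z` going upwards.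
  have hchain : ∀ y, desc par M y = D → ∃ j, par^[j] z = y := by
    intro y hy
    obtain ⟨-, k, hk⟩ := hy ▸ hμ
    have : k0 ≤ k := by
      by_contra hlt
      exact hk0min k (by omega) (by rw [hk, hy])
    refine ⟨k - k0, ?_⟩
    rw [hz, ← Function.iterate_add_apply, Nat.sub_add_cancel this, hk]
  have hJ : ∃ j, par^[j + 1] z = par^[j] z ∨ desc par M (par^[j + 1] z) ≠ D := by
    obtain ⟨k, hk⟩ := exists_root_iter h z
    exact ⟨k, Or.inl (by rw [Function.iterate_succ_apply', hk])⟩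
  obtain ⟨j1, hj1, hj1min⟩ : ∃ j1,
      (par^[j1 + 1] z = par^[j1] z ∨ desc par M (par^[j1 + 1] z) ≠ D) ∧
      ∀ j < j1, par^[j + 1] z ≠ par^[j] z ∧ desc par M (par^[j + 1] z) = D :=
    ⟨Nat.find hJ, Nat.find_spec hJ, fun k hk => by
      have := Nat.find_min hJ hk
      push Not at this
      exact this⟩
  have hdj : ∀ j ≤ j1, desc par M (par^[j] z) = D := by
    intro j hj
    cases j with
    | zero => exact hk0
    | succ j => exact (hj1min j (by omega)).2
  have hself : ∀ y, desc par M y = D → hat y = y := fun y hy => hat1 y (hy ▸ hD)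
  refine ⟨z, j1, hk0, fun j hj => by rw [hself _ (hdj j hj)]; exact hdj j hj,
    fun j hj => (hj1min j hj).1, ?_, ?_, ?_, ?_⟩
  · intro y hy hyM
    have hyy : hat y = y := hat1 y ⟨y, hyM, 0, rfl⟩
    rw [hyy] at hy
    obtain ⟨j, hj⟩ := hchain y hy
    have : y ∈ desc par M z := by
      rw [hk0, ← hy]
      exact ⟨hyM, 0, rfl⟩
    obtain ⟨-, i, hi⟩ := this
    exact anc_antisymm h hi hj
  · intro y hy hpy
    by_cases hne : (desc par M y).Nonempty
    · rw [hat1 y hne] at hy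
      have hne' : (desc par M (par y)).Nonempty := hne.mono (desc_par M y)
      rw [hat1 _ hne'] at hpy
      obtain ⟨j, hj⟩ := hchain y hy
      rcases lt_trichotomy j j1 with hlt | heq | hgt
      · have := (hj1min j hlt).2
        rw [Function.iterate_succ_apply', hj] at this
        exact absurd this hpy
      · rw [← hj, heq]
      · rcases hj1 with h1 | h1
        · rw [Function.iterate_succ_apply'] at h1
          rw [← hj, show j = (j - j1) + j1 by omega, Function.iterate_add_apply, iter_fixed h1]
        · exfalso
          apply h1
          apply Set.Subset.antisymm
          · have := desc_iter (par := par) M (par^[j1 + 1] z) (j - (j1 + 1))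
            rw [← Function.iterate_add_apply, show j - (j1 + 1) + (j1 + 1) = j by omega, hj,
              hy] at this
            exact this
          · rw [← hk0]
            exact desc_iter M _ _
    · rw [hat2 y hne] at hy
      exact absurd hy hpy
  · intro w hw hpw
    by_cases hne : (desc par M w).Nonempty
    · rw [hat1 w hne] at hw
      have hne' : (desc par M (par w)).Nonempty := hne.mono (desc_par M w)
      rw [hat1 _ hne'] at hpw
      have hJ' := hchain _ hpw
      by_contra hcon
      -- The child `x'` of `par w` on the way to `z` has descendant set `D`, which meets that of `w`.
      obtain ⟨j, hj, hjmin⟩ : ∃ j, par^[j] z = par w ∧ ∀ i < j, par^[i] z ≠ par w :=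
        ⟨Nat.find hJ', Nat.find_spec hJ', fun i hi => Nat.find_min hJ' hi⟩
      cases j with
      | zero => exact hcon hj.symm
      | succ j =>
        obtain ⟨x', hx'⟩ : ∃ x', x' = par^[j] z := ⟨_, rfl⟩
        have hx'p : par x' = par w := by rw [hx', ← Function.iterate_succ_apply' par, hj]
        have hx'ne : x' ≠ par w := hx' ▸ hjmin j (by omega)
        have hx'D : desc par M x' = D := by
          apply Set.Subset.antisymm
          · rw [← hpw, ← hx'p]; exact desc_par M x'
          · rw [← hk0, hx']; exact desc_iter M _ _
        obtain ⟨ν, hν⟩ := hne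
        have hν' : ν ∈ desc par M x' := by
          rw [hx'D, ← hpw]; exact desc_par M w hν
        obtain ⟨-, p, hp⟩ := hν
        obtain ⟨-, q, hq⟩ := hν'
        rcases anc_comparable hp hq with ⟨i, hi⟩ | ⟨i, hi⟩
        · cases i with
          | zero => exact hw ((congrArg _ hi).trans hx'D)
          | succ i =>
            rw [Function.iterate_succ_apply] at hi
            exact hx'ne (anc_antisymm h hi (k := i) (j := 1) hx'p).symm
        · cases i with
          | zero => exact hw ((congrArg _ hi.symm).trans hx'D)
          | succ i =>
            rw [Function.iterate_succ_apply, hx'p] at hi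
            have : par w = w := anc_antisymm h hi (k := i) (j := 1) rfl
            exact hw (by rw [← hpw, this])
    · rw [hat2 w hne] at hw
      exact absurd hpw hw
  · cases k0 with
    | zero => exact Or.inl (by rw [hz]; exact hμM)
    | succ k =>
      by_cases hzM : z ∈ M
      · exact Or.inl hzM
      right
      have hc1 : par (par^[k] μ) = z := by rw [hz, Function.iterate_succ_apply']
      have hc1D : desc par M (par^[k] μ) ≠ D := hk0min k (by omega)
      have hsub : desc par M (par^[k] μ) ⊆ D := by
        rw [← hk0, ← hc1]; exact desc_par M _
      obtain ⟨ν, hνD, hν⟩ : ∃ ν ∈ D, ν ∉ desc par M (par^[k] μ) := by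
        by_contra hcon
        push Not at hcon
        exact hc1D (Set.Subset.antisymm hsub hcon)
      rw [← hk0] at hνD
      have hνM : ν ∈ M := hνD.1
      obtain ⟨i, hi, himin⟩ : ∃ i, par^[i] ν = z ∧ ∀ i' < i, par^[i'] ν ≠ z :=
        ⟨Nat.find hνD.2, Nat.find_spec hνD.2, fun i hi => Nat.find_min hνD.2 hi⟩
      cases i with
      | zero => exact absurd (hi ▸ hνM) hzM
      | succ i =>
        refine ⟨par^[k] μ, par^[i] ν, ?_, hc1, by rw [← hi, Function.iterate_succ_apply'], ?_,
          himin i (by omega), ⟨μ, hμM, k, rfl⟩, ⟨ν, hνM, i, rfl⟩⟩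
        · intro heq
          exact hν ⟨hνM, i, heq.symm⟩
        · intro heq
          exact hc1D (by rw [heq, hk0])

end pieces

/-! ### Many addable edges -/

/-- Adding an edge inside a piece keeps the graph planar: a piece is attached to the rest of the
graph at the two vertices `a` and `z` only, and by itself it induces a forest. -/
lemma piece_planar {V : Type*} [Fintype V] {G : SimpleGraph V} (hG : IsPlanar G) {par : V → V}
    {lev : V → ℕ} (hpar : ∀ x, par x = x ∨ (G.Adj x (par x) ∧ lev (par x) < lev x))
    {M : Set V} (hM : ∀ x y, G.Adj x y → par x = y ∨ par y = x ∨ (x ∈ M ∧ y ∈ M))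
    {hat : V → V} (hat1 : ∀ x, (desc par M x).Nonempty → hat x = x)
    (hat2 : ∀ x, ¬ (desc par M x).Nonempty → hat x = hat (par x))
    (hat0 : ∀ x, (desc par M (hat x)).Nonempty)
    {x y : V} (hxy : desc par M (hat x) = desc par M (hat y)) : IsPlanar (G ⊔ edge x y) := by
  have hl : ∀ x, par x = x ∨ lev (par x) < lev x := fun x => (hpar x).imp id And.right
  obtain ⟨D, hD⟩ : ∃ D, D = desc par M (hat x) := ⟨_, rfl⟩
  obtain ⟨z, j1, hz, hch, hne, hMS, hup, hdown, -⟩ :=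
    piece_struct hl hat1 hat2 hD.symm (hD ▸ hat0 x)
  rw [← hD] at hxy
  obtain ⟨S, hS⟩ : ∃ S : Set V, S = {v | desc par M (hat v) = D} := ⟨_, rfl⟩
  have hmS : ∀ v, v ∈ S ↔ desc par M (hat v) = D := fun v => by rw [hS]; rfl
  simp only [ne_eq, ← hmS] at hch hMS hup hdown
  have hxS : x ∈ S := (hmS x).2 hD.symm
  have hyS : y ∈ S := (hmS y).2 hxy.symm
  have hzS : z ∈ S := hch 0 (Nat.zero_le _)
  obtain ⟨a, ha⟩ : ∃ a, a = par^[j1] z := ⟨_, rfl⟩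
  have haS : a ∈ S := ha ▸ hch j1 le_rfl
  rw [← ha] at hup
  have hcross : ∀ u v, G.Adj u v → u ∈ S → v ∉ S → u = a ∨ u = z := by
    intro u v huv hu hv
    rcases hM u v huv with h | h | h
    · exact Or.inl (hup u hu (h ▸ hv))
    · exact Or.inr (by rw [← h]; exact hdown v hv (h ▸ hu))
    · exact Or.inr (hMS u hu h.1)
  refine planar_of_minor (fun α _ _ K hK hm => ?_) hG
  have h1 := minor_of_sep (A := S) (B := Sᶜ ∪ {a, z}) (a := a) (b := z) hK.three haS hzS
    (by simp) (by simp)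
    (by
      rintro v hv (hv' | hv')
      · exact absurd hv hv'
      · exact hv')
    (fun v => by
      by_cases hv : v ∈ S
      · exact Or.inl hv
      · exact Or.inr (Or.inl hv))
    (by
      intro u v huv
      rcases huv with huv | huv
      · by_cases hu : u ∈ S <;> by_cases hv : v ∈ S
        · exact Or.inl ⟨hu, hv⟩
        · exact Or.inr ⟨Or.inr (hcross u v huv hu hv), Or.inl hv⟩
        · exact Or.inr ⟨Or.inl hu, Or.inr (hcross v u huv.symm hv hu)⟩
        · exact Or.inr ⟨Or.inl hu, Or.inl hv⟩
      · rw [edge_adj] at huv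
        rcases huv.1 with ⟨rfl, rfl⟩ | ⟨rfl, rfl⟩
        · exact Or.inl ⟨hxS, hyS⟩
        · exact Or.inl ⟨hyS, hxS⟩) hm
  rcases h1 with h1 | h1
  · exfalso
    refine hK.not_minor par s(x, y) s(a, z) ?_ h1
    intro u v huv
    rcases huv with ⟨huv | huv, hu, hv⟩ | huv
    · rcases hM u v huv with h | h | h
      · exact Or.inl h
      · exact Or.inr (Or.inl h)
      · exact absurd ((hMS u hu h.1).trans (hMS v hv h.2).symm) huv.ne
    · rw [edge_adj] at huv
      exact Or.inr (Or.inr (Or.inl (Sym2.eq_iff.2 huv.1)))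
    · rw [edge_adj] at huv
      exact Or.inr (Or.inr (Or.inr (Sym2.eq_iff.2 huv.1)))
  · have h2 : IsMinor K (restr G (Sᶜ ∪ {a, z}) ⊔ edge a z) := by
      refine IsMinor.mono ?_ h1
      intro u v huv
      rcases huv with ⟨huv | huv, hu, hv⟩ | huv
      · exact Or.inl ⟨huv, hu, hv⟩
      · right
        rw [edge_adj] at huv ⊢
        have h3 : u ∈ S ∧ v ∈ S := by
          rcases huv.1 with ⟨rfl, rfl⟩ | ⟨rfl, rfl⟩ <;> constructor <;> assumption
        have hu' := hu.resolve_left (fun h => h h3.1)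
        have hv' := hv.resolve_left (fun h => h h3.2)
        refine ⟨?_, huv.2⟩
        rcases hu' with rfl | hu' <;> rcases hv' with rfl | hv'
        · exact absurd rfl huv.2
        · exact Or.inl ⟨rfl, hv'⟩
        · exact Or.inr ⟨hu', rfl⟩
        · exact absurd (hu'.trans hv'.symm) huv.2
      · exact Or.inr huv
    by_cases haz : a = z
    · rw [haz, edge_self_eq, sup_bot_eq] at h2
      exact IsMinor.mono (restr_le _ _) h2
    · have hj : 0 < j1 := by
        rcases Nat.eq_zero_or_pos j1 with h | h
        · rw [h] at ha; exact absurd ha haz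
        · exact h
      have hz1 : par z ≠ z := hne 0 hj
      have hadj : ∀ k < j1, G.Adj (par^[k] z) (par^[k + 1] z) := by
        intro k hk
        rw [Function.iterate_succ_apply']
        rcases hpar (par^[k] z) with h | h
        · exact absurd (by rw [Function.iterate_succ_apply']; exact h) (hne k hk)
        · exact h.1
      have hreach : ∀ P : Set V, (∀ u v, G.Adj u v → (∃ k, 1 ≤ k ∧ k ≤ j1 ∧ par^[k] z = u) →
          (∃ k, 1 ≤ k ∧ k ≤ j1 ∧ par^[k] z = v) → (u ∈ P ↔ v ∈ P)) → ∀ k, k + 1 ≤ j1 →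
          (par^[k + 1] z ∈ P ↔ par z ∈ P) := by
        intro P hP k
        induction k with
        | zero => exact fun _ => Iff.rfl
        | succ k ih =>
          intro hk
          rw [← ih (by omega)]
          exact hP _ _ (hadj (k + 1) (by omega)).symm ⟨k + 2, by omega, by omega, rfl⟩
            ⟨k + 1, by omega, by omega, rfl⟩
      refine minor_of_contract (Q := {v | ∃ k, 1 ≤ k ∧ k ≤ j1 ∧ par^[k] z = v}) (q := par z)
        hK.nbr (by simp) (by simp) ?_ ⟨j1, hj, le_rfl, ha.symm⟩ ?_ ⟨1, le_rfl, hj, rfl⟩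
        (hadj 0 hj).symm h2
      · refine ⟨⟨par z, 1, le_rfl, hj, rfl⟩, ?_⟩
        rintro P ⟨u, ⟨k, hk1, hk2, hk⟩, huP⟩ hcl
        have h3 := hreach P (fun u v huv hu hv =>
          ⟨fun h => hcl u hu v hv huv h, fun h => hcl v hv u hu huv.symm h⟩)
        rintro v ⟨i, hi1, hi2, hi⟩
        obtain ⟨k, rfl⟩ : ∃ k', k = k' + 1 := ⟨k - 1, by omega⟩
        obtain ⟨i, rfl⟩ : ∃ k', i = k' + 1 := ⟨i - 1, by omega⟩
        rw [← hi, h3 i hi2, ← h3 k hk2, hk]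
        exact huP
      · rintro u ⟨k, hk1, hk2, hk⟩ (hu | hu | hu)
        · exact absurd (hk ▸ hch k hk2) hu
        · exact hu
        · exfalso
          rw [Set.mem_singleton_iff] at hu
          obtain ⟨k, rfl⟩ : ∃ k', k = k' + 1 := ⟨k - 1, by omega⟩
          rw [Function.iterate_succ_apply, hu] at hk
          exact hz1 (anc_antisymm hl (k := 1) (j := k) rfl hk).symm

/-- There are at most `2 |M|` pieces: the bottom vertices of the pieces are distinct, and each is
marked or a branching vertex of the subforest spanned by `M`. -/
lemma class_count {V : Type*} [Fintype V] {par : V → V} {lev : V → ℕ}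
    (hl : ∀ x, par x = x ∨ lev (par x) < lev x) {M : Set V}
    {hat : V → V} (hat1 : ∀ x, (desc par M x).Nonempty → hat x = x)
    (hat2 : ∀ x, ¬ (desc par M x).Nonempty → hat x = hat (par x))
    (hat0 : ∀ x, (desc par M (hat x)).Nonempty) :
    (Set.range fun x => desc par M (hat x)).ncard ≤ 2 * M.ncard := by
  classical
  obtain ⟨U, hU⟩ : ∃ U : Finset V, ∀ x, x ∈ U ↔ (desc par M x).Nonempty :=
    ⟨Finset.univ.filter fun x => (desc par M x).Nonempty, fun x => by simp⟩
  obtain ⟨C, hC⟩ : ∃ C : V → Finset V, ∀ y c, c ∈ C y ↔ c ∈ U ∧ par c = y ∧ c ≠ y :=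
    ⟨fun y => U.filter fun c => par c = y ∧ c ≠ y, fun y c => by simp⟩
  obtain ⟨Br, hBr⟩ : ∃ Br : Finset V, ∀ y, y ∈ Br ↔ y ∈ U ∧ 2 ≤ (C y).card :=
    ⟨U.filter fun y => 2 ≤ (C y).card, fun y => by simp⟩
  obtain ⟨M', hM'⟩ : ∃ M' : Finset V, ∀ y, y ∈ M' ↔ y ∈ M :=
    ⟨Finset.univ.filter fun y => y ∈ M, fun y => by simp⟩
  have hMcard : M.ncard = M'.card := by
    rw [← Set.ncard_coe_finset]
    congr 1
    ext y
    simp [hM']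
  have hMU : M' ⊆ U := fun y hy => (hU y).2 ⟨y, (hM' y).1 hy, 0, rfl⟩
  have hBrU : Br ⊆ U := fun y hy => ((hBr y).1 hy).1
  have hpt : ∀ y ∈ U, 1 + (if y ∈ Br then 1 else 0) ≤ (C y).card + (if y ∈ M' then 1 else 0) := by
    intro y hy
    have h1 : y ∉ M' → 1 ≤ (C y).card := by
      intro hyM
      obtain ⟨μ, hμM, hk⟩ := (hU y).1 hy
      obtain ⟨k, hk, hmin⟩ : ∃ k, par^[k] μ = y ∧ ∀ i < k, par^[i] μ ≠ y :=
        ⟨Nat.find hk, Nat.find_spec hk, fun i hi => Nat.find_min hk hi⟩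
      cases k with
      | zero => exact absurd ((hM' y).2 (hk ▸ hμM)) hyM
      | succ k =>
        refine Finset.card_pos.2 ⟨par^[k] μ, (hC _ _).2 ⟨(hU _).2 ⟨μ, hμM, k, rfl⟩, ?_,
          hmin k (by omega)⟩⟩
        rw [← hk, Function.iterate_succ_apply']
    by_cases hb : y ∈ Br
    · have := ((hBr y).1 hb).2
      rw [if_pos hb]; omega
    · rw [if_neg hb]
      by_cases hm : y ∈ M'
      · rw [if_pos hm]; omega
      · have := h1 hm
        omega
  have hsum := Finset.sum_le_sum hpt
  rw [Finset.sum_add_distrib, Finset.sum_add_distrib, Finset.sum_ite_mem, Finset.sum_ite_mem,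
    Finset.inter_eq_right.2 hMU, Finset.inter_eq_right.2 hBrU] at hsum
  have hCU : ∑ y ∈ U, (C y).card ≤ U.card := by
    rw [← Finset.card_biUnion]
    · refine Finset.card_le_card fun c hc => ?_
      obtain ⟨y, -, hy⟩ := Finset.mem_biUnion.1 hc
      exact ((hC _ _).1 hy).1
    · intro y _ y' _ hyy
      refine Finset.disjoint_left.2 fun c hc hc' => hyy ?_
      rw [← ((hC _ _).1 hc).2.1, ((hC _ _).1 hc').2.1]
  simp only [Finset.sum_const, smul_eq_mul, mul_one] at hsum
  have hkey : (Set.range fun x => desc par M (hat x)).ncard ≤ (M' ∪ Br).card := by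
    have hz : ∀ D ∈ Set.range (fun x => desc par M (hat x)), ∃ z ∈ M' ∪ Br, desc par M z = D := by
      rintro D ⟨x, hx⟩
      obtain ⟨z, j1, hz, -, -, -, -, -, hlast⟩ := piece_struct hl hat1 hat2 hx (hx ▸ hat0 x)
      refine ⟨z, ?_, hz⟩
      rw [Finset.mem_union]
      rcases hlast with h | ⟨c1, c2, h12, h1, h2, h3, h4, h5, h6⟩
      · exact Or.inl ((hM' z).2 h)
      · refine Or.inr ((hBr z).2 ⟨(hU z).2 (h5.mono (h1 ▸ desc_par M c1)), ?_⟩)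
        rw [← Finset.card_pair h12]
        refine Finset.card_le_card fun c hc => ?_
        rw [Finset.mem_insert, Finset.mem_singleton] at hc
        rcases hc with rfl | rfl
        · exact (hC _ _).2 ⟨(hU _).2 h5, h1, h3⟩
        · exact (hC _ _).2 ⟨(hU _).2 h6, h2, h4⟩
    have : Nonempty V ∨ IsEmpty V := (isEmpty_or_nonempty V).symm
    rcases this with hne | hemp
    swap
    · simp [Set.range_eq_empty]
    choose! z hz1 hz2 using hz
    rw [← Set.ncard_coe_finset]
    refine Set.ncard_le_ncard_of_injOn z (fun D hD => hz1 D hD) ?_ (Set.toFinite _)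
    intro D hD D' hD' hDD
    rw [← hz2 D hD, ← hz2 D' hD']
    exact congrArg _ hDD
  have := Finset.card_union_le M' Br
  omega

/-- Ordered pairs versus unordered pairs. -/
lemma pairs_le {V : Type*} [Fintype V] (s : Finset (V × V)) (t : Set (Sym2 V))
    (h : ∀ p ∈ s, s(p.1, p.2) ∈ t) : s.card ≤ 2 * t.ncard := by
  classical
  rw [Set.ncard_eq_toFinset_card t]
  refine Finset.card_le_mul_card_image_of_maps_to (f := fun p : V × V => s(p.1, p.2))
    (fun p hp => by simpa using h p hp) 2 ?_
  intro b _
  induction b using Sym2.inductionOn with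
  | _ a b =>
    refine (Finset.card_le_card (t := {(a, b), (b, a)}) fun p hp => ?_).trans Finset.card_le_two
    obtain ⟨x, y⟩ := p
    have := (Finset.mem_filter.1 hp).2
    simpa using this

/-- By Cauchy–Schwarz, a function with few values has many coincidences. -/
lemma sq_card_le {V β : Type*} [Fintype V] [DecidableEq V] [DecidableEq β] (f : V → β) :
    Fintype.card V ^ 2 ≤ (Finset.univ.image f).card *
      (Finset.univ.filter fun p : V × V => f p.1 = f p.2).card := by
  have h1 : Fintype.card V =
      ∑ b ∈ Finset.univ.image f, (Finset.univ.filter fun x => f x = b).card := by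
    rw [← Finset.card_univ, Finset.card_eq_sum_card_image f]
  have h2 : (Finset.univ.filter fun p : V × V => f p.1 = f p.2).card =
      ∑ b ∈ Finset.univ.image f, (Finset.univ.filter fun x => f x = b).card ^ 2 := by
    rw [Finset.card_eq_sum_card_fiberwise (f := fun p : V × V => f p.1)
      (t := Finset.univ.image f) (fun p _ => by simp)]
    refine Finset.sum_congr rfl fun b _ => ?_
    rw [sq, ← Finset.card_product]
    congr 1
    ext ⟨x, y⟩
    simp only [Finset.mem_filter, Finset.mem_univ, true_and, Finset.mem_product]
    constructor
    · rintro ⟨h, rfl⟩; exact ⟨rfl, h.symm⟩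
    · rintro ⟨rfl, h⟩; exact ⟨h.symm, rfl⟩
  rw [h2]
  conv_lhs => rw [h1]
  exact sq_sum_le_card_mul_sum_sq

/-- A spanning forest with `r` roots leaves `m - (n - r)` edges. -/
lemma nonforest_le {V : Type*} [Fintype V] {G : SimpleGraph V} {par : V → V} {lev : V → ℕ}
    (hpar : ∀ x, par x = x ∨ (G.Adj x (par x) ∧ lev (par x) < lev x)) :
    {e ∈ G.edgeSet | ∀ x, e ≠ s(x, par x)}.ncard + Fintype.card V ≤
      edgeCount G + {x | par x = x}.ncard := by
  classical
  have h1 : {x | par x = x}ᶜ.ncard ≤ {e ∈ G.edgeSet | ∃ x, e = s(x, par x)}.ncard := by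
    refine Set.ncard_le_ncard_of_injOn (fun x => s(x, par x)) ?_ ?_ (Set.toFinite _)
    · intro x hx
      exact ⟨((hpar x).resolve_left hx).1, x, rfl⟩
    · intro x _ y _ hxy
      rcases Sym2.eq_iff.1 hxy with h | h
      · exact h.1
      · exact anc_antisymm (fun x => (hpar x).imp id And.right) (k := 1) (j := 1) h.2 h.1.symm
  have h2 := Set.ncard_add_ncard_compl {x | par x = x}
  rw [Nat.card_eq_fintype_card] at h2
  have h3 : {e ∈ G.edgeSet | ∀ x, e ≠ s(x, par x)}.ncard +
      {e ∈ G.edgeSet | ∃ x, e = s(x, par x)}.ncard = edgeCount G := by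
    rw [edgeCount, ← Set.ncard_union_eq]
    · congr 1
      ext e
      simp only [Set.mem_union, Set.mem_ofPred_eq]
      by_cases h : ∃ x, e = s(x, par x)
      · simp only [h, and_true]
        tauto
      · have : ∀ x, e ≠ s(x, par x) := fun x hx => h ⟨x, hx⟩
        simp only [this]
        tauto
    · refine Set.disjoint_left.2 ?_
      rintro e ⟨-, he⟩ ⟨-, x, hx⟩
      exact he x hx
  omega

/-- A planar graph with at most `(1 + δ) n` edges has at least `k n` addable edges, where `δ`
depends only on `k`. If there are many components, the edges between them suffice; otherwise
the graph is close to a tree, and all nonadjacent pairs inside a piece are addable. -/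
lemma many_addable (k : ℕ) {n : ℕ} (hn : 24 * k * (2 * k + 5) ≤ n) (G : SimpleGraph (Fin n))
    (hG : IsPlanar G) (hm : 8 * (2 * k + 5) * edgeCount G ≤ (8 * (2 * k + 5) + 1) * n) :
    k * n ≤ (addableSet G).ncard := by
  classical
  obtain ⟨par, lev, hpar, hr1, hr2⟩ := exists_forest G
  have hl : ∀ x, par x = x ∨ lev (par x) < lev x := fun x => (hpar x).imp id And.right
  obtain ⟨R, hR⟩ : ∃ R : Finset (Fin n), ∀ x, x ∈ R ↔ par x = x :=
    ⟨Finset.univ.filter fun x => par x = x, fun x => by simp⟩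
  suffices h : 2 * k * n ≤ 2 * (addableSet G).ncard by
    have : 2 * (k * n) ≤ 2 * (addableSet G).ncard := by rw [← mul_assoc]; exact h
    omega
  by_cases hcase : 2 * k + 1 ≤ R.card
  · refine le_trans ?_ (pairs_le
      (Finset.univ.filter fun p : Fin n × Fin n => p.2 ∈ R ∧ ¬ G.Reachable p.1 p.2) _ ?_)
    · have hfib : ∀ x : Fin n, 2 * k ≤ (R.filter fun r => ¬ G.Reachable x r).card := by
        intro x
        have h1 := Finset.card_filter_add_card_filter_not (s := R) (fun r => G.Reachable x r)
        have h2 : (R.filter fun r => G.Reachable x r).card ≤ 1 := by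
          refine Finset.card_le_one.2 ?_
          intro a ha b hb
          rw [Finset.mem_filter] at ha hb
          exact hr2 a b ((hR a).1 ha.1) ((hR b).1 hb.1) (ha.2.symm.trans hb.2)
        omega
      have h3 : (Finset.univ.filter fun p : Fin n × Fin n => p.2 ∈ R ∧ ¬ G.Reachable p.1 p.2) =
          (Finset.univ.sigma (fun x : Fin n => R.filter fun r => ¬ G.Reachable x r)).map
            (Equiv.sigmaEquivProd (Fin n) (Fin n)).toEmbedding := by
        ext ⟨x, y⟩
        simp
      rw [h3, Finset.card_map, Finset.card_sigma]
      calc 2 * k * n = ∑ _x : Fin n, 2 * k := by simp [mul_comm]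
        _ ≤ _ := Finset.sum_le_sum fun x _ => hfib x
    · rintro ⟨x, y⟩ hp
      have hxy := (Finset.mem_filter.1 hp).2.2
      refine ⟨?_, fun h => hxy (Adj.reachable h), planar_add_cross hG hxy⟩
      rw [Sym2.mk_isDiag_iff]
      intro h
      exact hxy (h ▸ Reachable.refl _)
  · obtain ⟨F, hF⟩ : ∃ F : Finset (Sym2 (Fin n)), ∀ e, e ∈ F ↔ e ∈ G.edgeSet ∧
        ∀ x, e ≠ s(x, par x) :=
      ⟨Finset.univ.filter fun e => e ∈ G.edgeSet ∧ ∀ x, e ≠ s(x, par x), fun x => by simp⟩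
    have hFc := nonforest_le hpar
    have e1 : {e ∈ G.edgeSet | ∀ x, e ≠ s(x, par x)} = (F : Set (Sym2 (Fin n))) := by
      ext e; simp [hF]
    have e2 : {x | par x = x} = (R : Set (Fin n)) := by
      ext e; simp [hR]
    rw [e1, e2, Set.ncard_coe_finset, Set.ncard_coe_finset, Fintype.card_fin] at hFc
    obtain ⟨M, hM⟩ : ∃ M : Finset (Fin n), M = R ∪ F.biUnion Sym2.toFinset := ⟨_, rfl⟩
    have hMc : M.card ≤ R.card + 2 * F.card := by
      rw [hM]
      refine (Finset.card_union_le _ _).trans (Nat.add_le_add_left ?_ _)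
      rw [mul_comm]
      refine Finset.card_biUnion_le_card_mul _ _ _ fun e _ => ?_
      rw [Sym2.card_toFinset]
      split_ifs <;> omega
    have hMe : ∀ x y, G.Adj x y → par x = y ∨ par y = x ∨
        (x ∈ (M : Set (Fin n)) ∧ y ∈ (M : Set (Fin n))) := by
      intro x y hxy
      by_cases h1 : par x = y
      · exact Or.inl h1
      by_cases h2 : par y = x
      · exact Or.inr (Or.inl h2)
      have : s(x, y) ∈ F := by
        refine (hF _).2 ⟨hxy, fun w hw => ?_⟩
        rcases Sym2.eq_iff.1 hw with ⟨rfl, h⟩ | ⟨h, rfl⟩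
        · exact h1 h.symm
        · exact h2 h.symm
      refine Or.inr (Or.inr ⟨?_, ?_⟩) <;> rw [hM, Finset.mem_coe, Finset.mem_union] <;> right <;>
        exact Finset.mem_biUnion.2 ⟨_, this, by simp⟩
    have hMr : ∀ x, par x = x → x ∈ (M : Set (Fin n)) := by
      intro x hx
      rw [hM, Finset.mem_coe, Finset.mem_union]
      exact Or.inl ((hR x).2 hx)
    obtain ⟨hat, hat0, hat1, hat2⟩ := exists_hat hl hMr
    have hcl := class_count hl hat1 hat2 hat0
    rw [Set.ncard_coe_finset] at hcl
    obtain ⟨f, hf⟩ : ∃ f : Fin n → Set (Fin n), f = fun x => desc par M (hat x) := ⟨_, rfl⟩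
    rw [← hf] at hcl
    have hsq := sq_card_le f
    have e3 : (Set.range f).ncard = (Finset.univ.image f).card := by
      rw [← Set.ncard_coe_finset]; simp
    rw [e3] at hcl
    rw [Fintype.card_fin] at hsq
    obtain ⟨P, hP⟩ : ∃ P, P = Finset.univ.filter fun p : Fin n × Fin n => f p.1 = f p.2 := ⟨_, rfl⟩
    rw [← hP] at hsq
    -- Discard the diagonal pairs and the adjacent pairs.
    have hd : (P.filter fun p => p.1 = p.2).card ≤ n := by
      calc _ ≤ (Finset.univ.image fun x : Fin n => (x, x)).card := by
            refine Finset.card_le_card ?_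
            rintro ⟨x, y⟩ hp
            have := (Finset.mem_filter.1 hp).2
            simp only at this
            simp [this]
        _ ≤ n := Finset.card_image_le.trans (by simp)
    have ha : (P.filter fun p => G.Adj p.1 p.2).card ≤ 2 * edgeCount G :=
      pairs_le _ _ fun p hp => (Finset.mem_filter.1 hp).2
    have hb : (P.filter fun p => p.1 ≠ p.2 ∧ ¬ G.Adj p.1 p.2).card ≤ 2 * (addableSet G).ncard := by
      refine pairs_le _ _ fun p hp => ?_
      obtain ⟨h0, h1, h2⟩ := Finset.mem_filter.1 hp
      rw [hP, hf, Finset.mem_filter] at h0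
      refine ⟨by rwa [Sym2.mk_isDiag_iff], h2, piece_planar hG hpar hMe hat1 hat2 hat0 h0.2⟩
    have hPc : P.card ≤ n + 2 * edgeCount G + 2 * (addableSet G).ncard := by
      refine le_trans (b := ((P.filter fun p => p.1 = p.2) ∪ (P.filter fun p => G.Adj p.1 p.2) ∪
        (P.filter fun p => p.1 ≠ p.2 ∧ ¬ G.Adj p.1 p.2)).card) (Finset.card_le_card ?_) ?_
      · intro p hp
        simp only [Finset.mem_union, Finset.mem_filter]
        tauto
      · refine (Finset.card_union_le _ _).trans ?_
        refine Nat.add_le_add ((Finset.card_union_le _ _).trans (Nat.add_le_add hd ha)) hb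
    obtain ⟨D, hD⟩ : ∃ D, D = 8 * (2 * k + 5) := ⟨_, rfl⟩
    rw [← hD] at hm
    obtain ⟨L, hL⟩ : ∃ L, L = (Finset.univ.image f).card := ⟨_, rfl⟩
    rw [← hL] at hsq hcl
    have hLb : D * L ≤ D * (12 * k) + 4 * n := by
      have h1 : L + 4 * n ≤ 12 * k + 4 * edgeCount G := by omega
      have h2 := Nat.mul_le_mul_left D h1
      have h3 := Nat.mul_le_mul_left 4 hm
      nlinarith
    -- `L (2k+5) ≤ n`
    have hLn : L * (2 * k + 5) ≤ n := by
      have : 8 * (L * (2 * k + 5)) ≤ 8 * n := by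
        calc 8 * (L * (2 * k + 5)) = D * L := by rw [hD]; ring
          _ ≤ D * (12 * k) + 4 * n := hLb
          _ = 4 * (24 * k * (2 * k + 5)) + 4 * n := by rw [hD]; ring
          _ ≤ 8 * n := by omega
      omega
    rcases Nat.eq_zero_or_pos n with h0 | h0
    · simp only [h0, mul_zero, zero_le]
    have hLpos : 0 < L := by
      rcases Nat.eq_zero_or_pos L with h | h
      · rw [h, zero_mul] at hsq
        exact absurd hsq (not_le.2 (by positivity))
      · exact h
    have hPl : (2 * k + 5) * n ≤ P.card := by
      refine Nat.le_of_mul_le_mul_left (c := L) ?_ hLpos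
      calc L * ((2 * k + 5) * n) = (L * (2 * k + 5)) * n := by ring
        _ ≤ n * n := Nat.mul_le_mul_right _ hLn
        _ = n ^ 2 := (sq n).symm
        _ ≤ _ := hsq
    have hm2 : edgeCount G ≤ 2 * n := by
      have hDpos : 0 < D := by omega
      refine Nat.le_of_mul_le_mul_left (c := D) (hm.trans ?_) hDpos
      nlinarith
    have : (2 * k + 5) * n = 2 * k * n + 5 * n := by ring
    omega


/-! ### Double counting -/

/-- Double counting along a family of moves `mv a p`, `p ∈ P a`, which are injective for fixed `a`
and can be undone by `dec` from the result and a code in `Q`. -/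
lemma switch {α β π κ : Type*} [Finite α] [Finite β] [Finite π] [Finite κ] {S : Set α} {B : Set β}
    (P : α → Set π) (mv : α → π → β) (Q : β → Set κ) (dec : β → κ → α) {c N₁ N₂ : ℕ}
    (hmv : ∀ a ∈ S, ∀ p ∈ P a, mv a p ∈ B)
    (hinj : ∀ a ∈ S, Set.InjOn (mv a) (P a))
    (hP : ∀ a ∈ S, N₁ ≤ c * (P a).ncard)
    (hdec : ∀ a ∈ S, ∀ p ∈ P a, ∃ k ∈ Q (mv a p), dec (mv a p) k = a)
    (hQ : ∀ b ∈ B, (Q b).ncard ≤ N₂) :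
    N₁ * S.ncard ≤ c * N₂ * B.ncard := by
  classical
  cases nonempty_fintype α
  cases nonempty_fintype β
  have hdc := Finset.sum_card_bipartiteAbove_eq_sum_card_bipartiteBelow
    (s := S.toFinset) (t := B.toFinset) (fun a b => ∃ p ∈ P a, mv a p = b)
  have h1 : ∀ a ∈ S.toFinset, N₁ ≤ c * (B.toFinset.bipartiteAbove
      (fun a b => ∃ p ∈ P a, mv a p = b) a).card := by
    intro a ha
    rw [Set.mem_toFinset] at ha
    refine (hP a ha).trans (Nat.mul_le_mul_left _ ?_)
    rw [← Set.ncard_coe_finset]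
    refine Set.ncard_le_ncard_of_injOn (mv a) ?_ (hinj a ha) (Set.toFinite _)
    intro p hp
    simp only [Finset.coe_bipartiteAbove, Set.mem_toFinset, Set.mem_ofPred_eq]
    exact ⟨hmv a ha p hp, p, hp, rfl⟩
  have h2 : ∀ b ∈ B.toFinset, (S.toFinset.bipartiteBelow
      (fun a b => ∃ p ∈ P a, mv a p = b) b).card ≤ N₂ := by
    intro b hb
    rw [Set.mem_toFinset] at hb
    refine le_trans ?_ (hQ b hb)
    rw [← Set.ncard_coe_finset]
    refine (Set.ncard_le_ncard (t := dec b '' Q b) ?_ (Set.toFinite _)).trans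
      (Set.ncard_image_le (Set.toFinite _))
    intro a ha
    simp only [Finset.coe_bipartiteBelow, Set.mem_toFinset, Set.mem_ofPred_eq] at ha
    obtain ⟨ha, p, hp, rfl⟩ := ha
    exact hdec a ha p hp
  rw [Set.ncard_eq_toFinset_card' S, Set.ncard_eq_toFinset_card' B]
  calc N₁ * S.toFinset.card = ∑ _a ∈ S.toFinset, N₁ := by simp [mul_comm]
    _ ≤ _ := Finset.sum_le_sum h1
    _ = c * ∑ b ∈ B.toFinset, (S.toFinset.bipartiteBelow
          (fun a b => ∃ p ∈ P a, mv a p = b) b).card := by rw [← Finset.mul_sum, hdc]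
    _ ≤ c * ∑ _b ∈ B.toFinset, N₂ := Nat.mul_le_mul_left _ (Finset.sum_le_sum h2)
    _ = c * N₂ * B.toFinset.card := by simp; ring

/-! ### Components under local changes -/

lemma component_eq {V : Type*} {G : SimpleGraph V} {W W' : Finset V} (hW : IsComponent G W)
    (hW' : IsComponent G W') {v : V} (hv : v ∈ W) (hv' : v ∈ W') : W = W' := by
  have key : ∀ {W W' : Finset V}, IsComponent G W → IsComponent G W' → v ∈ W → v ∈ W' →
      W ⊆ W' := by
    intro W W' hW hW' hv hv'
    have := ((conn_iff _ _).1 hW.1).2 (W' : Set V) ⟨v, hv, hv'⟩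
      (fun y _ z _ hyz hy => hW'.2 y hy z hyz)
    exact fun x hx => this hx
  exact Finset.Subset.antisymm (key hW hW' hv hv') (key hW' hW hv' hv)

/-- Changing the edges at the vertices of `T` only creates at most `|T|` new components. -/
lemma numOrderComponents_le {h n : ℕ} (H : SimpleGraph (Fin h)) {G G' : SimpleGraph (Fin n)}
    (T : Finset (Fin n)) (hT : ∀ v ∉ T, ∀ u, G.Adj v u ↔ G'.Adj v u) :
    numOrderComponents H G' ≤ numOrderComponents H G + T.card := by
  classical
  have hnew : {W : Finset (Fin n) | IsComponent G' W ∧ ∃ v ∈ T, v ∈ W}.ncard ≤ T.card := by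
    have : ∀ W ∈ {W : Finset (Fin n) | IsComponent G' W ∧ ∃ v ∈ T, v ∈ W}, ∃ v ∈ T, v ∈ W :=
      fun W hW => hW.2
    rcases isEmpty_or_nonempty (Fin n) with hemp | hne
    · have : {W : Finset (Fin n) | IsComponent G' W ∧ ∃ v ∈ T, v ∈ W} = ∅ := by
        ext W
        simp
      rw [this, Set.ncard_empty]
      exact Nat.zero_le _
    choose! f hf1 hf2 using this
    rw [← Set.ncard_coe_finset]
    refine Set.ncard_le_ncard_of_injOn f hf1 ?_ (Set.toFinite _)
    intro W hW W' hW' hff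
    have h1 := hf2 W hW
    have h2 := hf2 W' hW'
    rw [hff] at h1
    exact component_eq hW.1 hW'.1 h1 h2
  refine (Set.ncard_le_ncard (t := {W : Finset (Fin n) | IsComponent G W ∧ IsOrderCopy H G W} ∪
    {W : Finset (Fin n) | IsComponent G' W ∧ ∃ v ∈ T, v ∈ W}) ?_ (Set.toFinite _)).trans
    ((Set.ncard_union_le _ _).trans (Nat.add_le_add_left hnew _))
  rintro W ⟨hW, hc⟩
  by_cases hWT : ∃ v ∈ T, v ∈ W
  · exact Or.inr ⟨hW, hWT⟩
  · left
    have hadj : ∀ v ∈ W, ∀ u, G.Adj v u ↔ G'.Adj v u := fun v hv u =>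
      hT v (fun h => hWT ⟨v, h, hv⟩) u
    refine ⟨⟨?_, fun v hv u hvu => hW.2 v hv u ((hadj v hv u).1 hvu)⟩, ?_⟩
    · have h1 := hW.1
      have : G.induce (W : Set (Fin n)) = G'.induce (W : Set (Fin n)) := by
        ext ⟨x, hx⟩ ⟨y, hy⟩
        exact hadj x hx y
      rw [this]
      exact h1
    · obtain ⟨hW', hc⟩ := hc
      refine ⟨hW', fun i j => (hc i j).trans (hadj _ ?_ _).symm⟩
      exact (W.orderIsoOfFin hW' i).2

/-! ### Graphs with a set of isolated vertices -/

/-- Planar graphs with `e` edges and fewer than `X` components of the required kind, together with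
a set of `i` isolated vertices. -/
def States {h : ℕ} (H : SimpleGraph (Fin h)) (n e i X : ℕ) :
    Set (SimpleGraph (Fin n) × Finset (Fin n)) :=
  {a | IsPlanar a.1 ∧ edgeCount a.1 = e ∧ a.2.card = i ∧ (∀ v ∈ a.2, ∀ u, ¬ a.1.Adj v u) ∧
    numOrderComponents H a.1 < X}

/-- The graph obtained from `G` by deleting the edges in `E₁` and adding those in `E₂`. -/
def change {V : Type*} (G : SimpleGraph V) (E₁ E₂ : Set (Sym2 V)) : SimpleGraph V :=
  fromEdgeSet ((G.edgeSet \ E₁) ∪ E₂)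

lemma change_edgeSet {V : Type*} {G : SimpleGraph V} {E₁ E₂ : Set (Sym2 V)}
    (h2 : ∀ e ∈ E₂, ¬ e.IsDiag) : (change G E₁ E₂).edgeSet = (G.edgeSet \ E₁) ∪ E₂ := by
  rw [change, edgeSet_fromEdgeSet]
  ext e
  simp only [Set.mem_sdiff, Set.mem_union, Sym2.mem_diagSet]
  constructor
  · exact fun h => h.1
  · intro h
    refine ⟨h, ?_⟩
    rcases h with h | h
    · exact G.not_isDiag_of_mem_edgeSet h.1
    · exact h2 e h

lemma change_adj {V : Type*} {G : SimpleGraph V} {E₁ E₂ : Set (Sym2 V)} {x y : V}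
    (h : (change G E₁ E₂).Adj x y) : (G.Adj x y ∧ s(x, y) ∉ E₁) ∨ s(x, y) ∈ E₂ := by
  rw [change, fromEdgeSet_adj] at h
  exact h.1

lemma change_back {V : Type*} {G : SimpleGraph V} {E₁ E₂ : Set (Sym2 V)}
    (h1 : E₁ ⊆ G.edgeSet) (h2 : ∀ e ∈ E₂, ¬ e.IsDiag) (h3 : ∀ e ∈ E₂, e ∉ G.edgeSet) :
    change (change G E₁ E₂) E₂ E₁ = G := by
  rw [← edgeSet_inj, change_edgeSet (fun e he => G.not_isDiag_of_mem_edgeSet (h1 he)),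
    change_edgeSet h2]
  ext e
  have := @h1 e
  have := h3 e
  simp only [Set.mem_sdiff, Set.mem_union]
  tauto

/-- A legal move `(v, E₁, E₂)` from the state `a`: exchange `E₁` for the smaller set `E₂`, in such
a way that `v` becomes (or stays) isolated and is added to the set of isolated vertices. -/
structure Legal {n : ℕ} (a : SimpleGraph (Fin n) × Finset (Fin n))
    (p : Fin n × Set (Sym2 (Fin n)) × Set (Sym2 (Fin n))) : Prop where
  fresh : p.1 ∉ a.2
  sub : p.2.1 ⊆ a.1.edgeSet
  diag : ∀ e ∈ p.2.2, ¬ e.IsDiag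
  new : ∀ e ∈ p.2.2, e ∉ a.1.edgeSet
  planar : IsPlanar (change a.1 p.2.1 p.2.2)
  card : p.2.1.ncard = p.2.2.ncard + 1
  iso : ∀ u, a.1.Adj p.1 u → s(p.1, u) ∈ p.2.1
  avoid : ∀ e ∈ p.2.2, p.1 ∉ e ∧ ∀ v ∈ a.2, v ∉ e
  small : ∃ T : Finset (Fin n), T.card ≤ 5 ∧ ∀ e ∈ p.2.1 ∪ p.2.2, ∀ x ∈ e, x ∈ T

lemma Legal.mem {h n e i X : ℕ} {H : SimpleGraph (Fin h)}
    {a : SimpleGraph (Fin n) × Finset (Fin n)} (ha : a ∈ States H n (e + 1) i X)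
    {p : Fin n × Set (Sym2 (Fin n)) × Set (Sym2 (Fin n))} (hp : Legal a p) :
    (change a.1 p.2.1 p.2.2, insert p.1 a.2) ∈ States H n e (i + 1) (X + 5) := by
  obtain ⟨-, he, hi, hiso, hX⟩ := ha
  refine ⟨hp.planar, ?_, ?_, ?_, ?_⟩
  · have h1 : edgeCount (change a.1 p.2.1 p.2.2) =
        (a.1.edgeSet \ p.2.1).ncard + p.2.2.ncard := by
      rw [edgeCount, change_edgeSet hp.diag, Set.ncard_union_eq]
      exact Set.disjoint_left.2 fun e he he' => hp.new e he' he.1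
    have h2 := Set.ncard_sdiff_add_ncard_of_subset hp.sub (Set.toFinite _)
    rw [edgeCount] at he
    have := hp.card
    simp only
    omega
  · simp only [Finset.card_insert_of_notMem hp.fresh, hi]
  · intro v hv u huv
    simp only [Finset.mem_insert] at hv
    rcases change_adj huv with h | h
    · rcases hv with rfl | hv
      · exact h.2 (hp.iso u h.1)
      · exact hiso v hv u h.1
    · have := hp.avoid _ h
      rcases hv with rfl | hv
      · exact this.1 (by simp)
      · exact this.2 v hv (by simp)
  · obtain ⟨T, hT, hT'⟩ := hp.small
    have := numOrderComponents_le H (G := a.1) (G' := change a.1 p.2.1 p.2.2) T (by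
      intro v hv u
      have h1 : s(v, u) ∉ p.2.1 := fun h => hv (hT' _ (Or.inl h) v (by simp))
      have h2 : s(v, u) ∉ p.2.2 := fun h => hv (hT' _ (Or.inr h) v (by simp))
      rw [← mem_edgeSet, ← mem_edgeSet, change_edgeSet hp.diag]
      simp [h1, h2])
    simp only
    omega

/-- Switching along legal moves. -/
lemma switch_legal {h n e i X : ℕ} {H : SimpleGraph (Fin h)} {S : Set _}
    (hS : S ⊆ States H n (e + 1) i X) (Q : SimpleGraph (Fin n) × Finset (Fin n) →
      Set (Fin n × Set (Sym2 (Fin n)) × Set (Sym2 (Fin n))))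
    {c N₁ N₂ : ℕ}
    (hP : ∀ a ∈ S, N₁ ≤ c * {p | Legal a p ∧
      p ∈ Q (change a.1 p.2.1 p.2.2, insert p.1 a.2)}.ncard)
    (hQ : ∀ b ∈ States H n e (i + 1) (X + 5), (Q b).ncard ≤ N₂) :
    N₁ * S.ncard ≤ c * N₂ * (States H n e (i + 1) (X + 5)).ncard := by
  classical
  refine switch (fun a => {p | Legal a p ∧ p ∈ Q (change a.1 p.2.1 p.2.2, insert p.1 a.2)})
    (fun a p => (change a.1 p.2.1 p.2.2, insert p.1 a.2)) Q
    (fun b p => (change b.1 p.2.2 p.2.1, b.2.erase p.1)) (fun a ha p hp => hp.1.mem (hS ha)) ?_ hP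
    ?_ hQ
  · rintro a ha ⟨v, E₁, E₂⟩ ⟨hp, -⟩ ⟨v', E₁', E₂'⟩ ⟨hp', -⟩ heq
    simp only [Prod.mk.injEq] at heq ⊢
    have hE := congrArg edgeSet heq.1
    rw [change_edgeSet hp.diag, change_edgeSet hp'.diag] at hE
    refine ⟨?_, ?_, ?_⟩
    · have h1 : v ∈ insert v' a.2 := heq.2 ▸ Finset.mem_insert_self _ _
      rcases Finset.mem_insert.1 h1 with h | h
      · exact h
      · exact absurd h hp.fresh
    · ext e
      have h0 := Set.ext_iff.1 hE e
      have h1 : e ∈ E₁ → e ∈ a.1.edgeSet := fun h => hp.sub h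
      have h2 : e ∈ E₁' → e ∈ a.1.edgeSet := fun h => hp'.sub h
      have h3 := hp.new e
      have h4 := hp'.new e
      simp only [Set.mem_union, Set.mem_sdiff] at *
      tauto
    · ext e
      have h0 := Set.ext_iff.1 hE e
      have h3 := hp.new e
      have h4 := hp'.new e
      simp only [Set.mem_union, Set.mem_sdiff] at *
      tauto
  · rintro a ha p ⟨hp, hpQ⟩
    refine ⟨p, hpQ, ?_⟩
    simp only [change_back hp.sub hp.diag hp.new, Finset.erase_insert hp.fresh]


/-! ### One switching step -/

lemma ncard_pairs {α β : Type*} [Finite α] [Finite β] {A : Set α} {B : α → Set β} {N : ℕ}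
    (hB : ∀ a ∈ A, N ≤ (B a).ncard) : N * A.ncard ≤ {p : α × β | p.1 ∈ A ∧ p.2 ∈ B p.1}.ncard := by
  have := switch (S := A) (B := {p : α × β | p.1 ∈ A ∧ p.2 ∈ B p.1}) (κ := Unit) (c := 1)
    (N₁ := N) (N₂ := 1) B (fun a b => (a, b)) (fun _ => Set.univ) (fun p _ => p.1)
    (fun a ha p hp => ⟨ha, hp⟩) (fun a _ p _ p' _ h => (Prod.mk.inj h).2)
    (fun a ha => by rw [one_mul]; exact hB a ha) (fun a _ p _ => ⟨(), trivial, rfl⟩)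
    (fun b _ => by simp)
  simpa using this

/-- Many addable edges avoid a given small set of vertices. -/
lemma addable_avoid (k t : ℕ) {n : ℕ} (hn : 24 * (k + t) * (2 * (k + t) + 5) ≤ n)
    (G : SimpleGraph (Fin n)) (hG : IsPlanar G)
    (hm : 8 * (2 * (k + t) + 5) * edgeCount G ≤ (8 * (2 * (k + t) + 5) + 1) * n)
    (T : Finset (Fin n)) (hT : T.card ≤ t) :
    k * n ≤ {f ∈ addableSet G | ∀ v ∈ T, v ∉ f}.ncard := by
  have h1 := many_addable (k + t) hn G hG hm
  have h2 : (addableSet G).ncard ≤ {f ∈ addableSet G | ∀ v ∈ T, v ∉ f}.ncard + t * n := by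
    refine (Set.ncard_le_ncard (t := {f ∈ addableSet G | ∀ v ∈ T, v ∉ f} ∪
      (fun p : Fin n × Fin n => s(p.1, p.2)) '' ((T : Set (Fin n)) ×ˢ Set.univ)) ?_
      (Set.toFinite _)).trans ((Set.ncard_union_le _ _).trans (Nat.add_le_add_left ?_ _))
    · intro f hf
      by_cases h : ∀ v ∈ T, v ∉ f
      · exact Or.inl ⟨hf, h⟩
      · right
        push Not at h
        obtain ⟨v, hv, hvf⟩ := h
        obtain ⟨w, rfl⟩ := hvf
        exact ⟨(v, w), ⟨hv, trivial⟩, rfl⟩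
    · refine (Set.ncard_image_le (Set.toFinite _)).trans ?_
      rw [Set.ncard_prod, Set.ncard_coe_finset, Set.ncard_univ, Nat.card_eq_fintype_card,
        Fintype.card_fin]
      exact Nat.mul_le_mul_right _ hT
  rw [add_mul] at h1
  omega

lemma ncard_adj_le {V : Type*} [Fintype V] (G : SimpleGraph V) :
    {p : V × V | G.Adj p.1 p.2}.ncard ≤ 2 * edgeCount G := by
  classical
  rw [Set.ncard_eq_toFinset_card]
  exact pairs_le _ _ fun p hp => by simpa using hp

/-- Degree sum: every vertex that is not of degree 0, 1 or 2 contributes at least 3. -/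
lemma degree_count {n : ℕ} (G : SimpleGraph (Fin n)) :
    3 * n ≤ 2 * edgeCount G + 3 * {v | ∀ u, ¬ G.Adj v u}.ncard +
      2 * {v | ∃ u, ∀ x, G.Adj v x ↔ x = u}.ncard +
      {v | ∃ u w, u ≠ w ∧ ∀ x, G.Adj v x ↔ x = u ∨ x = w}.ncard := by
  classical
  have hs := G.sum_degrees_eq_twice_card_edges
  have he : edgeCount G = G.edgeFinset.card := by
    rw [edgeCount, ← coe_edgeFinset, Set.ncard_coe_finset]
  rw [← he] at hs
  have hpt : ∀ v : Fin n, 3 ≤ G.degree v + 3 * (if ∀ u, ¬ G.Adj v u then 1 else 0) +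
      2 * (if ∃ u, ∀ x, G.Adj v x ↔ x = u then 1 else 0) +
      (if ∃ u w, u ≠ w ∧ ∀ x, G.Adj v x ↔ x = u ∨ x = w then 1 else 0) := by
    intro v
    by_cases h0 : G.degree v = 0
    · rw [if_pos]
      · omega
      · intro u hu
        rw [← mem_neighborFinset, Finset.card_eq_zero.1 h0] at hu
        simp at hu
    by_cases h1 : G.degree v = 1
    · obtain ⟨u, hu⟩ := Finset.card_eq_one.1 h1
      rw [if_pos (c := ∃ u, ∀ x, G.Adj v x ↔ x = u)]
      · omega
      · exact ⟨u, fun x => by rw [← mem_neighborFinset, hu, Finset.mem_singleton]⟩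
    by_cases h2 : G.degree v = 2
    · obtain ⟨u, w, huw, hu⟩ := Finset.card_eq_two.1 h2
      rw [if_pos (c := ∃ u w, u ≠ w ∧ ∀ x, G.Adj v x ↔ x = u ∨ x = w)]
      · omega
      · exact ⟨u, w, huw, fun x => by
          rw [← mem_neighborFinset, hu, Finset.mem_insert, Finset.mem_singleton]⟩
    omega
  have hsum := Finset.sum_le_sum fun v (_ : v ∈ (Finset.univ : Finset (Fin n))) => hpt v
  simp only [Finset.sum_add_distrib, ← Finset.mul_sum, hs, Finset.sum_const, Finset.card_univ,
    Fintype.card_fin, smul_eq_mul, ← Finset.card_filter] at hsum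
  simp only [Set.ncard_eq_toFinset_card', Set.toFinset_ofPred]
  rw [mul_comm 3 n]
  convert hsum using 1

section step

variable {h n e i X : ℕ} {H : SimpleGraph (Fin h)}

lemma change_le {V : Type*} (G : SimpleGraph V) (E : Set (Sym2 V)) : change G E ∅ ≤ G :=
  fun x y hxy => by
    rcases change_adj hxy with h | h
    · exact h.1
    · exact absurd h (Set.notMem_empty _)

/-- Many isolated vertices: delete an arbitrary edge. -/
lemma step_zero {q : ℕ} (hi : i < h) (hq : n ≤ q * (e + 1)) (hn : 0 < n) :
    {a ∈ States H n (e + 1) i X | n ≤ 20 * {v | v ∉ a.2 ∧ ∀ u, ¬ a.1.Adj v u}.ncard}.ncard ≤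
      20 * q * h * (States H n e (i + 1) (X + 5)).ncard := by
  have key := switch_legal (H := H) (e := e) (i := i) (X := X) (c := 20 * q) (N₁ := n * n)
    (N₂ := h * (n * n))
    (S := {a ∈ States H n (e + 1) i X | n ≤ 20 * {v | v ∉ a.2 ∧ ∀ u, ¬ a.1.Adj v u}.ncard})
    (fun a ha => ha.1)
    (fun b => (fun p : Fin n × Fin n × Fin n => (p.1, {s(p.2.1, p.2.2)}, ∅)) ''
      ((b.2 : Set (Fin n)) ×ˢ Set.univ)) ?_ ?_
  · refine Nat.le_of_mul_le_mul_left (c := n * n) ?_ (by positivity)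
    refine key.trans (le_of_eq ?_)
    ring
  · rintro a ⟨ha, hcase⟩
    have h1 : ({v | v ∉ a.2 ∧ ∀ u, ¬ a.1.Adj v u} ×ˢ a.1.edgeSet).ncard ≤
        {p | Legal a p ∧ p ∈ (fun p : Fin n × Fin n × Fin n => (p.1, {s(p.2.1, p.2.2)}, ∅)) ''
          (((change a.1 p.2.1 p.2.2, insert p.1 a.2).2 : Set (Fin n)) ×ˢ Set.univ)}.ncard := by
      refine Set.ncard_le_ncard_of_injOn (fun p => (p.1, {p.2}, ∅)) ?_ ?_ (Set.toFinite _)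
      · rintro ⟨v, f⟩ ⟨⟨hv, hv'⟩, hf⟩
        induction f using Sym2.inductionOn with
        | _ x y =>
        refine ⟨⟨hv, by simpa using hf, by simp, by simp, planar_mono (change_le _ _) ha.1, by simp,
          fun u hu => absurd hu (hv' u), by simp, {x, y}, ?_, ?_⟩, (v, x, y), by simp, rfl⟩
        · exact Finset.card_le_two.trans (by norm_num)
        · simp
      · rintro ⟨v, f⟩ _ ⟨v', f'⟩ _ heq
        simp only [Prod.mk.injEq, Set.singleton_eq_singleton_iff] at heq
        exact Prod.ext heq.1 heq.2.1
    rw [Set.ncard_prod] at h1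
    have h2 : a.1.edgeSet.ncard = e + 1 := ha.2.1
    rw [h2] at h1
    calc n * n ≤ (20 * _) * (q * (e + 1)) := Nat.mul_le_mul hcase hq
      _ = 20 * q * (_ * (e + 1)) := by ring
      _ ≤ _ := Nat.mul_le_mul_left _ h1
  · intro b hb
    refine (Set.ncard_image_le (Set.toFinite _)).trans ?_
    rw [Set.ncard_prod, Set.ncard_coe_finset, Set.ncard_univ, Nat.card_eq_fintype_card,
      Fintype.card_prod, Fintype.card_fin, hb.2.2.1]
    exact Nat.mul_le_mul_right _ hi

/-- Many leaves: delete the edge at a leaf. -/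
lemma step_one (hi : i < h) (hn : 0 < n) :
    {a ∈ States H n (e + 1) i X | n ≤ 20 * {v | ∃ u, ∀ x, a.1.Adj v x ↔ x = u}.ncard}.ncard ≤
      20 * h * (States H n e (i + 1) (X + 5)).ncard := by
  have key := switch_legal (H := H) (e := e) (i := i) (X := X) (c := 20) (N₁ := n)
    (N₂ := h * n)
    (S := {a ∈ States H n (e + 1) i X | n ≤ 20 * {v | ∃ u, ∀ x, a.1.Adj v x ↔ x = u}.ncard})
    (fun a ha => ha.1)
    (fun b => (fun p : Fin n × Fin n => (p.1, {s(p.1, p.2)}, ∅)) ''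
      ((b.2 : Set (Fin n)) ×ˢ Set.univ)) ?_ ?_
  · refine Nat.le_of_mul_le_mul_left (c := n) ?_ hn
    refine key.trans (le_of_eq ?_)
    ring
  · rintro a ⟨ha, hcase⟩
    refine hcase.trans (Nat.mul_le_mul_left _ ?_)
    have : ∀ v : Fin n, ∃ u, (∃ u, ∀ x, a.1.Adj v x ↔ x = u) → ∀ x, a.1.Adj v x ↔ x = u := by
      intro v
      by_cases h : ∃ u, ∀ x, a.1.Adj v x ↔ x = u
      · obtain ⟨u, hu⟩ := h
        exact ⟨u, fun _ => hu⟩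
      · exact ⟨v, fun h' => absurd h' h⟩
    choose g hg using this
    refine Set.ncard_le_ncard_of_injOn (fun v => (v, {s(v, g v)}, ∅)) ?_ ?_ (Set.toFinite _)
    · intro v hv
      have hv' := hg v hv
      have hadj : a.1.Adj v (g v) := (hv' _).2 rfl
      refine ⟨⟨fun h => ha.2.2.2.1 v h _ hadj, by simpa using hadj, by simp, by simp,
        planar_mono (change_le _ _) ha.1, by simp, fun u hu => ?_, by simp, {v, g v}, ?_, ?_⟩,
        (v, g v), by simp, rfl⟩
      · rw [(hv' u).1 hu]; rfl
      · exact Finset.card_le_two.trans (by norm_num)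
      · simp
    · rintro v _ v' _ heq
      exact (Prod.mk.inj heq).1
  · intro b hb
    refine (Set.ncard_image_le (Set.toFinite _)).trans ?_
    rw [Set.ncard_prod, Set.ncard_coe_finset, Set.ncard_univ, Nat.card_eq_fintype_card,
      Fintype.card_fin, hb.2.2.1]
    exact Nat.mul_le_mul_right _ hi

/-- Many vertices of degree two with nonadjacent neighbours: suppress one of them. -/
lemma step_two (hi : i < h) (hn : 0 < n) (hm : e ≤ 2 * n) :
    {a ∈ States H n (e + 1) i X | n ≤ 8 * {v | ∃ u w, u ≠ w ∧
      (∀ x, a.1.Adj v x ↔ x = u ∨ x = w) ∧ ¬ a.1.Adj u w}.ncard}.ncard ≤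
      32 * h * (States H n e (i + 1) (X + 5)).ncard := by
  have key := switch_legal (H := H) (e := e) (i := i) (X := X) (c := 8) (N₁ := n)
    (N₂ := h * (4 * n))
    (S := {a ∈ States H n (e + 1) i X | n ≤ 8 * {v | ∃ u w, u ≠ w ∧
      (∀ x, a.1.Adj v x ↔ x = u ∨ x = w) ∧ ¬ a.1.Adj u w}.ncard})
    (fun a ha => ha.1)
    (fun b => (fun p : Fin n × Fin n × Fin n =>
      (p.1, {s(p.1, p.2.1), s(p.1, p.2.2)}, {s(p.2.1, p.2.2)})) ''
      ((b.2 : Set (Fin n)) ×ˢ {p : Fin n × Fin n | b.1.Adj p.1 p.2})) ?_ ?_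
  · refine Nat.le_of_mul_le_mul_left (c := n) ?_ hn
    refine key.trans (le_of_eq ?_)
    ring
  · rintro a ⟨ha, hcase⟩
    refine hcase.trans (Nat.mul_le_mul_left _ ?_)
    have : ∀ v : Fin n, ∃ p : Fin n × Fin n, (∃ u w, u ≠ w ∧
        (∀ x, a.1.Adj v x ↔ x = u ∨ x = w) ∧ ¬ a.1.Adj u w) →
        p.1 ≠ p.2 ∧ (∀ x, a.1.Adj v x ↔ x = p.1 ∨ x = p.2) ∧ ¬ a.1.Adj p.1 p.2 := by
      intro v
      by_cases h : ∃ u w, u ≠ w ∧ (∀ x, a.1.Adj v x ↔ x = u ∨ x = w) ∧ ¬ a.1.Adj u w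
      · obtain ⟨u, w, hu⟩ := h
        exact ⟨(u, w), fun _ => hu⟩
      · exact ⟨(v, v), fun h' => absurd h' h⟩
    choose g hg using this
    refine Set.ncard_le_ncard_of_injOn (fun v => (v, {s(v, (g v).1), s(v, (g v).2)},
      {s((g v).1, (g v).2)})) ?_ ?_ (Set.toFinite _)
    · intro v hv
      obtain ⟨huw, hv', hnadj⟩ := hg v hv
      obtain ⟨u, hu⟩ : ∃ u, u = (g v).1 := ⟨_, rfl⟩
      obtain ⟨w, hw⟩ : ∃ w, w = (g v).2 := ⟨_, rfl⟩
      rw [← hu, ← hw] at huw hnadj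
      simp only [← hu, ← hw] at hv' ⊢
      have hvu : a.1.Adj v u := (hv' _).2 (Or.inl rfl)
      have hvw : a.1.Adj v w := (hv' _).2 (Or.inr rfl)
      have hdiag : ∀ e ∈ ({s(u, w)} : Set (Sym2 (Fin n))), ¬ e.IsDiag := by simpa using huw
      refine ⟨⟨fun h => ha.2.2.2.1 v h _ hvu, ?_, hdiag, by simpa using hnadj, ?_, ?_,
        fun x hx => ?_, ?_, {v, u, w}, ?_, ?_⟩, (v, u, w), ⟨by simp, ?_⟩, rfl⟩
      · rintro f (rfl | rfl)
        · exact hvu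
        · exact hvw
      · refine planar_mono ?_ (planar_suppress ha.1 hvu.symm hvw)
        intro x y hxy
        have hne := hxy.ne
        rcases change_adj hxy with ⟨h1, h2⟩ | h1
        · left
          refine ⟨h1, ?_, ?_⟩
          · rintro rfl
            apply h2
            rcases (hv' y).1 h1 with rfl | rfl <;> simp
          · rintro rfl
            apply h2
            rcases (hv' x).1 h1.symm with rfl | rfl <;> simp [Sym2.eq_swap]
        · right
          rw [edge_adj]
          exact ⟨Sym2.eq_iff.1 h1, hne⟩
      · rw [Set.ncard_pair, Set.ncard_singleton]
        intro heq
        rcases Sym2.eq_iff.1 heq with h | h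
        · exact huw h.2
        · exact hvw.ne h.1
      · rcases (hv' x).1 hx with rfl | rfl <;> simp
      · rintro f rfl
        refine ⟨?_, fun x hx hxf => ?_⟩
        · rw [Sym2.mem_iff]
          rintro (h | h)
          · exact hvu.ne h
          · exact hvw.ne h
        · rcases Sym2.mem_iff.1 hxf with rfl | rfl
          · exact ha.2.2.2.1 _ hx _ hvu.symm
          · exact ha.2.2.2.1 _ hx _ hvw.symm
      · exact Finset.card_le_three.trans (by norm_num)
      · simp
      · change s(u, w) ∈ (change _ _ _).edgeSet
        rw [change_edgeSet hdiag]
        exact Or.inr rfl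
    · rintro v _ v' _ heq
      exact (Prod.mk.inj heq).1
  · intro b hb
    refine (Set.ncard_image_le (Set.toFinite _)).trans ?_
    rw [Set.ncard_prod, Set.ncard_coe_finset, hb.2.2.1]
    refine Nat.mul_le_mul hi ((ncard_adj_le _).trans ?_)
    rw [hb.2.1]
    omega

/-- Many vertices of degree two in triangles: isolate one of them and add an addable edge. -/
lemma step_three (hi : i < h) (hn : 0 < n) (hn' : 24 * (1 + h) * (2 * (1 + h) + 5) ≤ n)
    (hm : e ≤ 2 * n)
    (hm' : 8 * (2 * (1 + h) + 5) * (e + 1) ≤ (8 * (2 * (1 + h) + 5) + 1) * n) :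
    {a ∈ States H n (e + 1) i X | n ≤ 8 * {v | ∃ u w, u ≠ w ∧
      (∀ x, a.1.Adj v x ↔ x = u ∨ x = w) ∧ a.1.Adj u w}.ncard}.ncard ≤
      64 * h * (States H n e (i + 1) (X + 5)).ncard := by
  have key := switch_legal (H := H) (e := e) (i := i) (X := X) (c := 8) (N₁ := n * n)
    (N₂ := h * ((4 * n) * (2 * n)))
    (S := {a ∈ States H n (e + 1) i X | n ≤ 8 * {v | ∃ u w, u ≠ w ∧
      (∀ x, a.1.Adj v x ↔ x = u ∨ x = w) ∧ a.1.Adj u w}.ncard})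
    (fun a ha => ha.1)
    (fun b => (fun p : Fin n × (Fin n × Fin n) × Sym2 (Fin n) =>
      (p.1, {s(p.1, p.2.1.1), s(p.1, p.2.1.2)}, {p.2.2})) ''
      ((b.2 : Set (Fin n)) ×ˢ {p : Fin n × Fin n | b.1.Adj p.1 p.2} ×ˢ b.1.edgeSet)) ?_ ?_
  · refine Nat.le_of_mul_le_mul_left (c := n * n) ?_ (by positivity)
    refine key.trans (le_of_eq ?_)
    ring
  · rintro a ⟨ha, hcase⟩
    have : ∀ v : Fin n, ∃ p : Fin n × Fin n, (∃ u w, u ≠ w ∧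
        (∀ x, a.1.Adj v x ↔ x = u ∨ x = w) ∧ a.1.Adj u w) →
        p.1 ≠ p.2 ∧ (∀ x, a.1.Adj v x ↔ x = p.1 ∨ x = p.2) ∧ a.1.Adj p.1 p.2 := by
      intro v
      by_cases h : ∃ u w, u ≠ w ∧ (∀ x, a.1.Adj v x ↔ x = u ∨ x = w) ∧ a.1.Adj u w
      · obtain ⟨u, w, hu⟩ := h
        exact ⟨(u, w), fun _ => hu⟩
      · exact ⟨(v, v), fun h' => absurd h' h⟩
    choose g hg using this
    have hcount := ncard_pairs (N := n) (A := {v | ∃ u w, u ≠ w ∧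
        (∀ x, a.1.Adj v x ↔ x = u ∨ x = w) ∧ a.1.Adj u w})
      (B := fun v => {f ∈ addableSet (change a.1 {s(v, (g v).1), s(v, (g v).2)} ∅) |
        ∀ x ∈ insert v a.2, x ∉ f}) (by
        intro v _
        refine (one_mul n).symm.le.trans
          (addable_avoid 1 h hn' _ (planar_mono (change_le _ _) ha.1) ?_ _ ?_)
        · refine le_trans (Nat.mul_le_mul_left _ ?_) hm'
          rw [← ha.2.1]
          exact Set.ncard_le_ncard (edgeSet_mono (change_le _ _)) (Set.toFinite _)
        · have h1 := Finset.card_insert_le v a.2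
          have h2 := ha.2.2.1
          omega)
    calc n * n ≤ n * (8 * _) := Nat.mul_le_mul_left _ hcase
      _ = 8 * (n * _) := by ring
      _ ≤ 8 * _ := Nat.mul_le_mul_left _ hcount
      _ ≤ _ := Nat.mul_le_mul_left _ ?_
    refine Set.ncard_le_ncard_of_injOn (fun p => (p.1, {s(p.1, (g p.1).1), s(p.1, (g p.1).2)},
      {p.2})) ?_ ?_ (Set.toFinite _)
    · rintro ⟨v, f⟩ ⟨hv, hf, hav⟩
      obtain ⟨huw, hv', hadj⟩ := hg v hv
      obtain ⟨u, hu⟩ : ∃ u, u = (g v).1 := ⟨_, rfl⟩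
      obtain ⟨w, hw⟩ : ∃ w, w = (g v).2 := ⟨_, rfl⟩
      simp only [← hu, ← hw] at huw hadj hv' hf hav ⊢
      have hvu : a.1.Adj v u := (hv' _).2 (Or.inl rfl)
      have hvw : a.1.Adj v w := (hv' _).2 (Or.inr rfl)
      have hvf : v ∉ f := hav v (Finset.mem_insert_self _ _)
      have hdiag : ∀ e ∈ ({f} : Set (Sym2 (Fin n))), ¬ e.IsDiag := by
        rintro e rfl
        exact hf.1
      refine ⟨⟨fun h => ha.2.2.2.1 v h _ hvu, ?_, hdiag, ?_, ?_, ?_,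
        fun x hx => ?_, ?_, ?_⟩, (v, (u, w), f), ⟨by simp, ?_, ?_⟩, rfl⟩
      · rintro f (rfl | rfl)
        · exact hvu
        · exact hvw
      · rintro f' rfl hf'
        apply hf.2.1
        rw [change_edgeSet (by simp)]
        refine Or.inl ⟨hf', ?_⟩
        rintro (h | h) <;> rw [h] at hvf <;> simp at hvf
      · refine planar_mono ?_ hf.2.2
        intro x y hxy
        have hne := hxy.ne
        rcases change_adj hxy with ⟨h1, h2⟩ | h1
        · left
          rw [change, fromEdgeSet_adj]
          exact ⟨Or.inl ⟨h1, h2⟩, hne⟩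
        · right
          rw [fromEdgeSet_adj]
          exact ⟨h1, hne⟩
      · rw [Set.ncard_pair, Set.ncard_singleton]
        intro heq
        rcases Sym2.eq_iff.1 heq with h | h
        · exact huw h.2
        · exact hvw.ne h.1
      · rcases (hv' x).1 hx with rfl | rfl <;> simp
      · rintro f rfl
        exact ⟨hvf, fun x hx => hav x (Finset.mem_insert_of_mem hx)⟩
      · induction f using Sym2.inductionOn with
        | _ x y =>
        refine ⟨{v, u, w, x, y}, Finset.card_le_five, ?_⟩
        simp
      · change s(u, w) ∈ (change _ _ _).edgeSet
        rw [change_edgeSet hdiag]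
        refine Or.inl ⟨hadj, ?_⟩
        rintro (h | h) <;> rcases Sym2.eq_iff.1 h with h | h
        · exact hvu.ne h.1.symm
        · exact hvw.ne h.2.symm
        · exact hvu.ne h.1.symm
        · exact hvw.ne h.2.symm
      · change f ∈ (change _ _ _).edgeSet
        rw [change_edgeSet hdiag]
        exact Or.inr rfl
    · rintro ⟨v, f⟩ _ ⟨v', f'⟩ _ heq
      simp only [Prod.mk.injEq, Set.singleton_eq_singleton_iff] at heq
      exact Prod.ext heq.1 heq.2.2
  · intro b hb
    refine (Set.ncard_image_le (Set.toFinite _)).trans ?_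
    rw [Set.ncard_prod, Set.ncard_prod, Set.ncard_coe_finset, hb.2.2.1]
    refine Nat.mul_le_mul hi (Nat.mul_le_mul ((ncard_adj_le _).trans ?_) ?_)
    · rw [hb.2.1]
      omega
    · exact (le_of_eq hb.2.1).trans hm

/-- One switching step: at the cost of a constant factor, trade an edge for an isolated vertex. -/
lemma step {q : ℕ} (hi : i < h) (hq : n ≤ q * (e + 1))
    (hn' : 24 * (1 + h) * (2 * (1 + h) + 5) ≤ n)
    (hm' : 8 * (2 * (1 + h) + 5) * (e + 1) ≤ (8 * (2 * (1 + h) + 5) + 1) * n) :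
    (States H n (e + 1) i X).ncard ≤
      (20 * q * h + 20 * h + 32 * h + 64 * h) * (States H n e (i + 1) (X + 5)).ncard := by
  have hn7 : 168 * (1 + h) ≤ n := by nlinarith
  have hn : 0 < n := by omega
  have hm40 : 40 * (e + 1) ≤ 41 * n := by
    by_contra hcon
    push Not at hcon
    obtain ⟨D, hD⟩ : ∃ D, 8 * (2 * (1 + h) + 5) = 40 + D := ⟨16 * (1 + h), by ring⟩
    rw [hD] at hm'
    have : n ≤ e + 1 := by omega
    nlinarith
  have hm : e ≤ 2 * n := by omega
  have h0 := step_zero (H := H) (X := X) hi hq hn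
  have h1 := step_one (H := H) (e := e) (X := X) hi hn
  have h2 := step_two (H := H) (X := X) hi hn hm
  have h3 := step_three (H := H) (X := X) hi hn hn' hm hm'
  rw [add_mul, add_mul, add_mul]
  refine le_trans ?_ (Nat.add_le_add (Nat.add_le_add (Nat.add_le_add h0 h1) h2) h3)
  refine le_trans ?_ (Nat.add_le_add_right (Nat.add_le_add_right (Set.ncard_union_le _ _) _) _)
  refine le_trans ?_ (Nat.add_le_add_right (Set.ncard_union_le _ _) _)
  refine le_trans ?_ (Set.ncard_union_le _ _)
  refine Set.ncard_le_ncard ?_ (Set.toFinite _)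
  intro a ha
  by_contra hcon
  simp only [Set.mem_union, Set.mem_ofPred_eq, ha, true_and, not_or, not_le] at hcon
  obtain ⟨⟨⟨hc0, hc1⟩, hc2⟩, hc3⟩ := hcon
  have hdeg := degree_count a.1
  rw [ha.2.1] at hdeg
  have hz : {v | ∀ u, ¬ a.1.Adj v u}.ncard ≤
      {v | v ∉ a.2 ∧ ∀ u, ¬ a.1.Adj v u}.ncard + a.2.card := by
    rw [← Set.ncard_coe_finset]
    refine (Set.ncard_le_ncard ?_ (Set.toFinite _)).trans (Set.ncard_union_le _ _)
    intro v hv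
    by_cases hva : v ∈ a.2
    · exact Or.inr hva
    · exact Or.inl ⟨hva, hv⟩
  have ht : {v | ∃ u w, u ≠ w ∧ ∀ x, a.1.Adj v x ↔ x = u ∨ x = w}.ncard ≤
      {v | ∃ u w, u ≠ w ∧ (∀ x, a.1.Adj v x ↔ x = u ∨ x = w) ∧ ¬ a.1.Adj u w}.ncard +
      {v | ∃ u w, u ≠ w ∧ (∀ x, a.1.Adj v x ↔ x = u ∨ x = w) ∧ a.1.Adj u w}.ncard := by
    refine (Set.ncard_le_ncard ?_ (Set.toFinite _)).trans (Set.ncard_union_le _ _)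
    rintro v ⟨u, w, huw, hv⟩
    by_cases hadj : a.1.Adj u w
    · exact Or.inr ⟨u, w, huw, hv, hadj⟩
    · exact Or.inl ⟨u, w, huw, hv, hadj⟩
  have hcard := ha.2.2.1
  omega

end step

/-! ### Inserting a copy of the tree -/

/-- All edges of a tree join a vertex to its parent. -/
lemma tree_par {h : ℕ} {H : SimpleGraph (Fin h)} (hH : H.IsTree) :
    ∃ par : Fin h → Fin h, ∀ x y, H.Adj x y → par x = y ∨ par y = x := by
  classical
  obtain ⟨par, lev, hpar, -, hr2⟩ := exists_forest H
  refine ⟨par, fun x y hxy => ?_⟩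
  have h1 := nonforest_le hpar
  have h2 : {x | par x = x}.ncard ≤ 1 := by
    rw [Set.ncard_le_one (Set.toFinite _)]
    exact fun a ha b hb => hr2 a b ha hb (hH.1.preconnected a b)
  have h3 := hH.card_edgeFinset
  have h4 : edgeCount H = H.edgeFinset.card := by
    rw [edgeCount, ← coe_edgeFinset, Set.ncard_coe_finset]
  have h5 : {e ∈ H.edgeSet | ∀ x, e ≠ s(x, par x)}.ncard = 0 := by omega
  rw [Set.ncard_eq_zero (Set.toFinite _)] at h5
  by_contra hcon
  push Not at hcon
  have : s(x, y) ∈ {e ∈ H.edgeSet | ∀ x, e ≠ s(x, par x)} := by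
    refine ⟨hxy, fun w hw => ?_⟩
    rcases Sym2.eq_iff.1 hw with ⟨rfl, h⟩ | ⟨h, rfl⟩
    · exact hcon.1 h.symm
    · exact hcon.2 h.symm
  rw [h5] at this
  exact this

/-- The order-preserving copy of `H` on `s`, with no other edges (`⊥` if `s` has the wrong size). -/
noncomputable def copyOn {h n : ℕ} (H : SimpleGraph (Fin h)) (s : Finset (Fin n)) :
    SimpleGraph (Fin n) :=
  if hs : s.card = h then H.map (s.orderEmbOfFin hs).toEmbedding else ⊥

section copies

variable {h n : ℕ} {H : SimpleGraph (Fin h)} {s : Finset (Fin n)}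

lemma copyOn_eq (hs : s.card = h) :
    copyOn H s = H.map (s.orderEmbOfFin hs).toEmbedding := dif_pos hs

lemma copyOn_mem {x y : Fin n} (hxy : (copyOn H s).Adj x y) : x ∈ s ∧ y ∈ s := by
  by_cases hs : s.card = h
  · rw [copyOn_eq hs, map_adj] at hxy
    obtain ⟨u, v, -, rfl, rfl⟩ := hxy
    exact ⟨s.orderEmbOfFin_mem hs u, s.orderEmbOfFin_mem hs v⟩
  · rw [copyOn, dif_neg hs] at hxy
    exact absurd hxy (by simp)

lemma copyOn_edgeSet (hs : s.card = h) : (copyOn H s).edgeSet.ncard = H.edgeSet.ncard := by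
  rw [copyOn_eq hs, edgeSet_map]
  exact Set.ncard_image_of_injective _ (Function.Embedding.sym2Map _).injective

lemma copyOn_par (hH : H.IsTree) (hs : s.card = h) : ∃ par : Fin n → Fin n,
    ∀ x y, (copyOn H s).Adj x y → par x = y ∨ par y = x := by
  obtain ⟨par, hpar⟩ := tree_par hH
  have hinj : Function.Injective (s.orderEmbOfFin hs) := (s.orderEmbOfFin hs).injective
  refine ⟨Function.extend (s.orderEmbOfFin hs) (s.orderEmbOfFin hs ∘ par) id, fun x y hxy => ?_⟩
  rw [copyOn_eq hs, map_adj] at hxy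
  obtain ⟨u, v, huv, rfl, rfl⟩ := hxy
  rw [RelEmbedding.coe_toEmbedding, hinj.extend_apply, hinj.extend_apply]
  rcases hpar u v huv with h | h
  · exact Or.inl (congrArg _ h)
  · exact Or.inr (congrArg _ h)

lemma isOrderCopy_of (hs : s.card = h) {G : SimpleGraph (Fin n)}
    (hG : ∀ x ∈ s, ∀ y, G.Adj x y ↔ (copyOn H s).Adj x y) : IsOrderCopy H G s := by
  refine ⟨hs, fun i j => ?_⟩
  rw [hG _ (s.orderIsoOfFin hs i).2, copyOn_eq hs, Finset.coe_orderIsoOfFin_apply,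
    Finset.coe_orderIsoOfFin_apply]
  exact (map_adj_apply (f := (s.orderEmbOfFin hs).toEmbedding)).symm

lemma isComponent_of (hH : H.IsTree) (hs : s.card = h) {G : SimpleGraph (Fin n)}
    (hG : ∀ x ∈ s, ∀ y, G.Adj x y ↔ (copyOn H s).Adj x y) : IsComponent G s := by
  refine ⟨?_, fun v hv u huv => (copyOn_mem ((hG v hv u).1 huv)).2⟩
  obtain ⟨hs', hc⟩ := isOrderCopy_of hs hG
  let φ : H ≃g G.induce (s : Set (Fin n)) :=
    { toEquiv := (s.orderIsoOfFin hs').toEquiv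
      map_rel_iff' := fun {i j} => (hc i j).symm }
  exact φ.connected_iff.1 hH.1

end copies

/-- Inserting an addable edge and a copy of the tree on the isolated vertices `s` returns to the
right number of edges. There are about `k n` choices for the edge, while the result arises in only
`O(n)` ways. -/
lemma final_switch {h n e X : ℕ} {H : SimpleGraph (Fin h)} (hH : H.IsTree) (k : ℕ)
    (hn : 24 * (k + h) * (2 * (k + h) + 5) ≤ n)
    (hm : 8 * (2 * (k + h) + 5) * e ≤ (8 * (2 * (k + h) + 5) + 1) * n) :
    k * n * (States H n e h X).ncard ≤
      (X + h + 2) * (e + h) * (planarSet n (e + h)).ncard := by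
  classical
  have hh : 0 < h := by
    obtain ⟨x⟩ := hH.1.nonempty
    exact x.pos
  have hHe : H.edgeSet.ncard + 1 = h := by
    have h3 := hH.card_edgeFinset
    rw [← coe_edgeFinset, Set.ncard_coe_finset, h3, Fintype.card_fin]
  -- The edges of the new graph.
  have hE : ∀ (G : SimpleGraph (Fin n)) (s : Finset (Fin n)) (f : Sym2 (Fin n)), ¬ f.IsDiag →
      (G ⊔ fromEdgeSet {f} ⊔ copyOn H s).edgeSet = (G.edgeSet ∪ {f}) ∪ (copyOn H s).edgeSet := by
    intro G s f hf
    rw [edgeSet_sup, edgeSet_sup, edgeSet_fromEdgeSet]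
    congr 2
    ext f'
    simp only [Set.mem_sdiff, Set.mem_singleton_iff, Sym2.mem_diagSet]
    constructor
    · exact fun h => h.1
    · rintro rfl; exact ⟨rfl, hf⟩
  have hcs : ∀ (s : Finset (Fin n)), ∀ f ∈ (copyOn H s).edgeSet, ∀ x ∈ f, x ∈ s := by
    intro s f hf x hx
    induction f using Sym2.inductionOn with
    | _ u v =>
      rcases Sym2.mem_iff.1 hx with rfl | rfl
      · exact (copyOn_mem hf).1
      · exact (copyOn_mem hf).2
  have hnot : ∀ (s : Finset (Fin n)) (f : Sym2 (Fin n)), (∀ v ∈ s, v ∉ f) →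
      f ∉ (copyOn H s).edgeSet := by
    intro s f hf hf'
    have := hcs s f hf'
    induction f using Sym2.inductionOn with
    | _ u v => exact hf u (this u (by simp)) (by simp)
  have hadj : ∀ a ∈ States H n e h X, ∀ f ∈ {f ∈ addableSet a.1 | ∀ v ∈ a.2, v ∉ f},
      ∀ x ∈ a.2, ∀ y, (a.1 ⊔ fromEdgeSet {f} ⊔ copyOn H a.2).Adj x y ↔
        (copyOn H a.2).Adj x y := by
    intro a ha f hf x hx y
    refine ⟨?_, fun h => Or.inr h⟩
    rintro ((h | h) | h)
    · exact absurd h (ha.2.2.2.1 x hx y)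
    · rw [fromEdgeSet_adj] at h
      exact absurd (h.1 ▸ Sym2.mem_mk_left x y) (hf.2 x hx)
    · exact h
  have key := switch (S := States H n e h X)
    (B := {G ∈ planarSet n (e + h) | numOrderComponents H G < X + h + 2})
    (c := 1) (N₁ := k * n) (N₂ := (X + h + 2) * (e + h))
    (fun a => {f ∈ addableSet a.1 | ∀ v ∈ a.2, v ∉ f})
    (fun a f => a.1 ⊔ fromEdgeSet {f} ⊔ copyOn H a.2)
    (fun G => {W : Finset (Fin n) | IsComponent G W ∧ IsOrderCopy H G W} ×ˢ G.edgeSet)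
    (fun G p => (fromEdgeSet {f ∈ G.edgeSet | f ≠ p.2 ∧ ∀ x ∈ f, x ∉ p.1}, p.1))
    ?_ ?_ ?_ ?_ ?_
  · rw [one_mul] at key
    exact key.trans (Nat.mul_le_mul_left _ (Set.ncard_le_ncard (fun G hG => hG.1)
      (Set.toFinite _)))
  · intro a ha f hf
    have hs := ha.2.2.1
    refine ⟨⟨?_, ?_⟩, ?_⟩
    · obtain ⟨par, hpar⟩ := copyOn_par (s := a.2) hH hs
      refine planar_add_tree (W := (a.2 : Set (Fin n))) hf.1.2.2 ?_ ?_
        (fun x y hxy => copyOn_mem hxy) par hpar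
      · exact Finset.card_pos.1 (hs ▸ hh)
      · rintro x hx y (h | h)
        · exact ha.2.2.2.1 x hx y h
        · rw [fromEdgeSet_adj] at h
          exact hf.2 x hx (h.1 ▸ Sym2.mem_mk_left x y)
    · have h1 : a.1.edgeSet.ncard = e := ha.2.1
      rw [edgeCount, hE _ _ _ hf.1.1, Set.ncard_union_eq, Set.ncard_union_eq, copyOn_edgeSet hs,
        Set.ncard_singleton, h1]
      · omega
      · exact Set.disjoint_singleton_right.2 hf.1.2.1
      · refine Set.disjoint_left.2 ?_
        rintro f' (h | rfl) h'
        · induction f' using Sym2.inductionOn with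
          | _ u v => exact ha.2.2.2.1 u (copyOn_mem h').1 v h
        · exact hnot _ _ hf.2 h'
    · have h1 := numOrderComponents_le H (G := a.1)
        (G' := a.1 ⊔ fromEdgeSet {f} ⊔ copyOn H a.2) (a.2 ∪ f.toFinset) (by
          intro v hv u
          rw [Finset.mem_union, Sym2.mem_toFinset, not_or] at hv
          refine ⟨fun h => Or.inl (Or.inl h), ?_⟩
          rintro ((h | h) | h)
          · exact h
          · rw [fromEdgeSet_adj] at h
            exact absurd (h.1 ▸ Sym2.mem_mk_left v u) hv.2
          · exact absurd (copyOn_mem h).1 hv.1)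
      have h2 := Finset.card_union_le a.2 f.toFinset
      rw [Sym2.card_toFinset_of_not_isDiag f hf.1.1, hs] at h2
      have h3 := ha.2.2.2.2
      omega
  · intro a ha f hf f' hf' heq
    have h1 := congrArg edgeSet heq
    simp only at h1
    rw [hE _ _ _ hf.1.1, hE _ _ _ hf'.1.1] at h1
    have h2 : f ∈ a.1.edgeSet ∪ {f'} ∪ (copyOn H a.2).edgeSet := h1 ▸ Or.inl (Or.inr rfl)
    rcases h2 with (h | h) | h
    · exact absurd h hf.1.2.1
    · exact h
    · exact absurd h (hnot _ _ hf.2)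
  · intro a ha
    rw [one_mul]
    exact addable_avoid k h hn a.1 ha.1 (by rw [ha.2.1]; exact hm) a.2 ha.2.2.1.le
  · intro a ha f hf
    have hs := ha.2.2.1
    refine ⟨(a.2, f), ⟨⟨isComponent_of hH hs (hadj a ha f hf), isOrderCopy_of hs (hadj a ha f hf)⟩,
      ?_⟩, ?_⟩
    · simp only
      rw [hE _ _ _ hf.1.1]
      exact Or.inl (Or.inr rfl)
    · refine Prod.ext ?_ rfl
      simp only
      rw [hE _ _ _ hf.1.1]
      ext x y
      rw [fromEdgeSet_adj]
      constructor
      · rintro ⟨⟨(h | h) | h, h1, h2⟩, -⟩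
        · exact h
        · exact absurd h h1
        · exact absurd (copyOn_mem h).1 (h2 x (by simp))
      · intro hxy
        refine ⟨⟨Or.inl (Or.inl hxy), ?_, ?_⟩, hxy.ne⟩
        · rintro rfl
          exact hf.1.2.1 hxy
        · intro v hv hva
          rcases Sym2.mem_iff.1 hv with rfl | rfl
          · exact ha.2.2.2.1 _ hva _ hxy
          · exact ha.2.2.2.1 _ hva _ hxy.symm
  · rintro G ⟨hG, hX⟩
    rw [Set.ncard_prod]
    exact Nat.mul_le_mul (le_of_lt hX) (le_of_eq hG.2)

/-! ### Conclusion -/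

/-- Iterating the switching step `j` times. -/
lemma iterate_step {h n q X : ℕ} {H : SimpleGraph (Fin h)} {m : ℕ} (hmh : h ≤ m)
    (hq : n ≤ q * (m - h)) (hn' : 24 * (1 + h) * (2 * (1 + h) + 5) ≤ n)
    (hm' : 8 * (2 * (1 + h) + 5) * m ≤ (8 * (2 * (1 + h) + 5) + 1) * n) (j : ℕ) (hj : j ≤ h) :
    (States H n m 0 X).ncard ≤ (20 * q * h + 20 * h + 32 * h + 64 * h) ^ j *
      (States H n (m - j) j (X + 5 * j)).ncard := by
  induction j with
  | zero => simp
  | succ j ih =>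
    refine (ih (by omega)).trans ?_
    rw [pow_succ, mul_assoc (_ ^ j)]
    refine Nat.mul_le_mul_left _ ?_
    obtain ⟨e, he⟩ : ∃ e, m - j = e + 1 := ⟨m - j - 1, by omega⟩
    have he' : m - (j + 1) = e := by omega
    rw [he, he', show X + 5 * (j + 1) = X + 5 * j + 5 by ring]
    refine step (by omega) (hq.trans (Nat.mul_le_mul_left _ (by omega))) hn' ?_
    exact le_trans (Nat.mul_le_mul_left _ (by omega)) hm'

lemma planarSet_nonempty {n m : ℕ} (hn : 168 ≤ n) (hm : 56 * m ≤ 57 * n) :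
    (planarSet n m).Nonempty := by
  suffices h : ∀ e ≤ m, (planarSet n e).Nonempty from h m le_rfl
  intro e
  induction e with
  | zero =>
    intro _
    have x : Fin n := ⟨0, by omega⟩
    refine ⟨⊥, ⟨?_, ?_⟩, ?_⟩
    · exact good_K5.not_minor id s(x, x) s(x, x) (fun x y h => absurd h (by simp))
    · exact good_K33.not_minor id s(x, x) s(x, x) (fun x y h => absurd h (by simp))
    · simp [edgeCount]
  | succ e ih =>
    intro he
    obtain ⟨G, hG, hGe⟩ := ih (by omega)
    have h1 := many_addable 1 (by omega) G hG (by rw [hGe]; omega)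
    have h2 : (addableSet G).Nonempty := by
      rw [← Set.ncard_pos (Set.toFinite _)]
      omega
    obtain ⟨f, hf1, hf2, hf3⟩ := h2
    refine ⟨_, hf3, ?_⟩
    have : (fromEdgeSet {f}).edgeSet = {f} := by
      rw [edgeSet_fromEdgeSet]
      ext f'
      simp only [Set.mem_sdiff, Set.mem_singleton_iff, Sym2.mem_diagSet]
      constructor
      · exact fun h => h.1
      · rintro rfl; exact ⟨rfl, hf1⟩
    rw [edgeCount, edgeSet_sup, this, Set.union_singleton, Set.ncard_insert_of_notMem hf2,
      ← hGe, edgeCount]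

/-- The number of graphs with fewer than `t` components of the required kind is at most a constant
over `k` times the number of all graphs. -/
lemma bad_le {h n q t : ℕ} {H : SimpleGraph (Fin h)} (hH : H.IsTree) {m : ℕ} (hmh : h ≤ m) (k : ℕ)
    (hk : 1 ≤ k) (hq : n ≤ q * (m - h)) (hn : 24 * (k + h) * (2 * (k + h) + 5) ≤ n)
    (hm : 8 * (2 * (k + h) + 5) * m ≤ (8 * (2 * (k + h) + 5) + 1) * n) :
    k * {G ∈ planarSet n m | numOrderComponents H G < t}.ncard ≤
      (20 * q * h + 20 * h + 32 * h + 64 * h) ^ h * ((t + 5 * h + h + 2) * 2) *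
        (planarSet n m).ncard := by
  have hm2 : m ≤ 2 * n := by
    by_contra hcon
    push Not at hcon
    nlinarith
  have hn1 : 24 * (1 + h) * (2 * (1 + h) + 5) ≤ n := by
    refine le_trans ?_ hn
    gcongr
  have hm1 : 8 * (2 * (1 + h) + 5) * m ≤ (8 * (2 * (1 + h) + 5) + 1) * n := by
    by_contra hcon
    push Not at hcon
    obtain ⟨k', rfl⟩ : ∃ k', k = k' + 1 := ⟨k - 1, by omega⟩
    have : n ≤ m := by
      by_contra h'
      push Not at h'
      have := Nat.mul_le_mul_left (8 * (2 * (1 + h) + 5)) h'.le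
      nlinarith
    have := Nat.mul_le_mul_left (16 * k') this
    nlinarith
  have hnpos : 0 < n := by
    refine lt_of_lt_of_le ?_ hn1
    positivity
  obtain ⟨C, hC⟩ : ∃ C, C = (20 * q * h + 20 * h + 32 * h + 64 * h) ^ h := ⟨_, rfl⟩
  have h1 := iterate_step (H := H) (X := t) hmh hq hn1 hm1 h le_rfl
  have h2 := final_switch (e := m - h) (X := t + 5 * h) hH k hn
    (le_trans (Nat.mul_le_mul_left _ (by omega)) hm)
  rw [Nat.sub_add_cancel hmh] at h2
  have h3 : {G ∈ planarSet n m | numOrderComponents H G < t}.ncard ≤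
      (States H n m 0 t).ncard := by
    refine Set.ncard_le_ncard_of_injOn (fun G => (G, ∅)) ?_ ?_ (Set.toFinite _)
    · rintro G ⟨⟨hG, hGe⟩, hX⟩
      exact ⟨hG, hGe, rfl, by simp, hX⟩
    · intro G _ G' _ heq
      exact (Prod.mk.inj heq).1
  rw [← hC] at h1 ⊢
  refine Nat.le_of_mul_le_mul_left (c := n) ?_ hnpos
  calc n * (k * _) ≤ n * (k * (C * (States H n (m - h) h (t + 5 * h)).ncard)) := by
        gcongr; exact h3.trans h1
    _ = C * (k * n * (States H n (m - h) h (t + 5 * h)).ncard) := by ring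
    _ ≤ C * ((t + 5 * h + h + 2) * m * (planarSet n m).ncard) := Nat.mul_le_mul_left _ h2
    _ ≤ C * ((t + 5 * h + h + 2) * (2 * n) * (planarSet n m).ncard) := by gcongr
    _ = _ := by ring

end TreeComp

theorem tree_components_whp (h : ℕ) (H : SimpleGraph (Fin h)) (hH : H.IsTree)
    (t : ℕ) (ht : 0 < t) (c : ℝ) (hc : 0 < c) (m : ℕ → ℕ)
    (hml : ∀ᶠ n : ℕ in atTop, c * (n : ℝ) ≤ (m n : ℝ))
    (hmu : ∀ ε : ℝ, 0 < ε → ∀ᶠ n : ℕ in atTop, (m n : ℝ) ≤ (1 + ε) * n) :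
    Tendsto (fun n : ℕ => planarProb n (m n) fun G => t ≤ numOrderComponents H G)
      atTop (nhds 1) := by
  obtain ⟨q, hq⟩ := exists_nat_ge (2 / c)
  obtain ⟨C, hC⟩ : ∃ C : ℕ, C = (20 * q * h + 20 * h + 32 * h + 64 * h) ^ h *
    ((t + 5 * h + h + 2) * 2) := ⟨_, rfl⟩
  rw [Metric.tendsto_atTop']
  intro ε hε
  obtain ⟨k, hk⟩ := exists_nat_gt ((C : ℝ) / ε)
  have hkpos : (0 : ℝ) < k := lt_of_le_of_lt (by positivity) hk
  have hk1 : 1 ≤ k := by exact_mod_cast hkpos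
  obtain ⟨D, hD⟩ : ∃ D : ℕ, D = 8 * (2 * (k + h) + 5) := ⟨_, rfl⟩
  have hDpos : (0 : ℝ) < D := by rw [hD]; positivity
  obtain ⟨n1, hn1⟩ := exists_nat_ge (2 * h / c)
  obtain ⟨n2, hn2⟩ := eventually_atTop.1
    ((hml.and (hmu (1 / D) (by positivity))).and
      ((eventually_ge_atTop n1).and (eventually_ge_atTop (24 * (k + h) * (2 * (k + h) + 5)))))
  refine ⟨n2, fun n hn => ?_⟩
  obtain ⟨⟨hl, hu⟩, hn1', hn3⟩ := hn2 n hn.le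
  -- `m - h ≥ c n / 2`
  have hch : 2 * (h : ℝ) ≤ c * n := by
    have : 2 * h / c ≤ (n : ℝ) := hn1.trans (by exact_mod_cast hn1')
    rw [div_le_iff₀ hc] at this
    linarith
  have hmh : h ≤ m n := by
    have : (h : ℝ) ≤ m n := by
      have : (0 : ℝ) ≤ h := by positivity
      linarith
    exact_mod_cast this
  have hqn : n ≤ q * (m n - h) := by
    have h1 : (c / 2) * n ≤ ((m n - h : ℕ) : ℝ) := by
      rw [Nat.cast_sub hmh]
      linarith
    have h2 : 1 ≤ q * (c / 2) := by
      rw [div_le_iff₀ hc] at hq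
      linarith
    have : (n : ℝ) ≤ q * ((m n - h : ℕ) : ℝ) := by
      calc (n : ℝ) = 1 * n := (one_mul _).symm
        _ ≤ (q * (c / 2)) * n := by gcongr
        _ = q * ((c / 2) * n) := by ring
        _ ≤ _ := by gcongr
    exact_mod_cast this
  have hDm : D * m n ≤ (D + 1) * n := by
    have : (D : ℝ) * m n ≤ (D + 1) * n := by
      calc (D : ℝ) * m n ≤ D * ((1 + 1 / D) * n) := by gcongr
        _ = (D + 1) * n := by field_simp
    exact_mod_cast this
  have hbad := TreeComp.bad_le (t := t) hH hmh k hk1 hqn hn3 (hD ▸ hDm)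
  rw [← hC] at hbad
  have hne : 0 < (planarSet n (m n)).ncard := by
    rw [Set.ncard_pos (Set.toFinite _)]
    have hD56 : 56 ≤ D := by omega
    refine TreeComp.planarSet_nonempty (le_trans ?_ hn3) ?_
    · nlinarith
    · by_contra hcon
      push Not at hcon
      have : n ≤ m n := by omega
      nlinarith [Nat.mul_le_mul hD56 this]
  have hsplit : {G ∈ planarSet n (m n) | t ≤ numOrderComponents H G}.ncard +
      {G ∈ planarSet n (m n) | numOrderComponents H G < t}.ncard = (planarSet n (m n)).ncard := by
    rw [← Set.ncard_union_eq]
    · congr 1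
      ext G
      simp only [Set.mem_union, Set.mem_ofPred_eq]
      have := le_or_gt t (numOrderComponents H G)
      tauto
    · refine Set.disjoint_left.2 ?_
      rintro G ⟨-, h1⟩ ⟨-, h2⟩
      omega
  have hneR : (0 : ℝ) < (planarSet n (m n)).ncard := by exact_mod_cast hne
  have hbadR : (k : ℝ) * ({G ∈ planarSet n (m n) | numOrderComponents H G < t}.ncard : ℝ) ≤
      C * (planarSet n (m n)).ncard := by exact_mod_cast hbad
  have hsplitR : ({G ∈ planarSet n (m n) | t ≤ numOrderComponents H G}.ncard : ℝ) =
      (planarSet n (m n)).ncard -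
        ({G ∈ planarSet n (m n) | numOrderComponents H G < t}.ncard : ℝ) := by
    rw [← hsplit]
    push_cast
    ring
  rw [planarProb, hsplitR, sub_div, div_self hneR.ne', Real.dist_eq, sub_sub_cancel_left, abs_neg,
    abs_of_nonneg (by positivity), div_lt_iff₀ hneR]
  rw [div_lt_iff₀ hε] at hk
  refine lt_of_mul_lt_mul_left (a := (k : ℝ)) ?_ hkpos.le
  calc _ ≤ (C : ℝ) * (planarSet n (m n)).ncard := hbadR
    _ < (k * ε) * (planarSet n (m n)).ncard := by gcongr
    _ = _ := by ring
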